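/- arXiv:2211.14374 — 4 statements merged into one kernel-verified Lean document; each statement's English description precedes it below -/
import Mathlib

section
/- Let u and v be weights. Then the following are equivalent: (i) ũ ≼ v, i.e. there exists C ≥ 1 with v(t) ≤ C·ũ(t) for all t ≥ 0; (ii) ũ ≼ ṽ; (iii) H^∞_u(ℂ) ⊆ H^∞_v(ℂ). In particular, if u is essential then H^∞_u(ℂ) ⊆ H^∞_v(ℂ) if and only if u ≼ v. -/
open Filter Set

/-- The associated weight function `ω_M(t) = sup_j log(t^j / M_j)` for `t ≠ 0`, `ω_M(0) = 0`. -/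
noncomputable def omegaM (M : ℕ → ℝ) (t : ℝ) : ℝ :=
  if t = 0 then 0 else ⨆ j : ℕ, Real.log (t ^ j / M j)

/-- `v_M(t) = exp(-ω_M(t))`. -/
noncomputable def vM (M : ℕ → ℝ) (t : ℝ) : ℝ :=
  Real.exp (-(omegaM M t))

/-- `v_{M,c}(t) = exp(-ω_M(c·t))`. -/
noncomputable def vMc (M : ℕ → ℝ) (c t : ℝ) : ℝ :=
  Real.exp (-(omegaM M (c * t)))

/-- `v_M^c(t) = exp(-c·ω_M(t))`. -/
noncomputable def vMpow (M : ℕ → ℝ) (c t : ℝ) : ℝ :=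
  Real.exp (-(c * omegaM M t))

/-- A weight sequence: positive, `M_0 = 1`, `(M_j)^{1/j} → ∞`. -/
def WeightSeq (M : ℕ → ℝ) : Prop :=
  (∀ j, 0 < M j) ∧ M 0 = 1 ∧
    Tendsto (fun j : ℕ => (M j) ^ (1 / (j : ℝ))) atTop atTop

/-- Log-convexity: `M_j² ≤ M_{j-1}·M_{j+1}` for `j ≥ 1`. -/
def LogConvexSeq (M : ℕ → ℝ) : Prop :=
  ∀ j : ℕ, 1 ≤ j → (M j) ^ 2 ≤ M (j - 1) * M (j + 1)

/-- The class `LC`: normalized log-convex weight sequences. -/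
def LCset (M : ℕ → ℝ) : Prop :=
  WeightSeq M ∧ LogConvexSeq M ∧ 1 ≤ M 1

/-- Weighted space of entire functions with `sup |f(z)|·v(|z|) < ∞`. -/
def Hinf (v : ℝ → ℝ) : Set (ℂ → ℂ) :=
  {f | Differentiable ℂ f ∧
    ∃ C : ℝ, ∀ z : ℂ, ‖f z‖ * v ‖z‖ ≤ C}

/-- The weighted sup-norm `‖f‖_v`. -/
noncomputable def wnorm (v : ℝ → ℝ) (f : ℂ → ℂ) : ℝ :=
  ⨆ z : ℂ, ‖f z‖ * v ‖z‖

/-- A weight: strictly positive, continuous, non-increasing and rapidly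
decreasing on `[0,∞)`. -/
def IsWeight (v : ℝ → ℝ) : Prop :=
  (∀ t : ℝ, 0 ≤ t → 0 < v t) ∧ ContinuousOn v (Set.Ici 0) ∧
    AntitoneOn v (Set.Ici 0) ∧
    ∀ k : ℕ, Tendsto (fun t : ℝ => t ^ k * v t) atTop (nhds 0)

/-- A normalized weight: `v ≡ 1` on `[0,1]`. -/
def NormalizedWeight (v : ℝ → ℝ) : Prop :=
  ∀ t : ℝ, 0 ≤ t → t ≤ 1 → v t = 1

/-- A (log-)convex weight: `t ↦ -log v(eᵗ)` is convex on `ℝ`. -/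
def ConvexWeight (v : ℝ → ℝ) : Prop :=
  ConvexOn ℝ Set.univ fun t : ℝ => -Real.log (v (Real.exp t))

/-- Moderate growth for a weight: `v(H·t) ≤ e^H · v(t)²`. -/
def ModerateGrowthW (v : ℝ → ℝ) : Prop :=
  ∃ H : ℝ, 1 ≤ H ∧ ∀ t : ℝ, 0 ≤ t → v (H * t) ≤ Real.exp H * (v t) ^ 2

/-- Moderate growth (mg) for a sequence: `M_{j+k} ≤ C^{j+k}·M_j·M_k`. -/
def MGseq (M : ℕ → ℝ) : Prop :=
  ∃ C : ℝ, 1 ≤ C ∧ ∀ j k : ℕ, M (j + k) ≤ C ^ (j + k) * M j * M k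

/-- The associated weight sequence `M^v_j = sup_{t>0} t^j·v(t)`. -/
noncomputable def assocSeq (v : ℝ → ℝ) (j : ℕ) : ℝ :=
  ⨆ t : Set.Ioi (0 : ℝ), (t : ℝ) ^ j * v t

/-- The unit ball `B_{1/v}(ℂ)` of entire functions bounded by `1/v`. -/
def BClass (v : ℝ → ℝ) : Set (ℂ → ℂ) :=
  {f | Differentiable ℂ f ∧ ∀ z : ℂ, ‖f z‖ ≤ 1 / v ‖z‖}

/-- The associated growth condition `w̃_v(z) = sup{|f(z)| : f ∈ B_{1/v}}`. -/
noncomputable def wTilde (v : ℝ → ℝ) (z : ℂ) : ℝ :=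
  sSup {x : ℝ | ∃ f ∈ BClass v, x = ‖f z‖}

/-- The associated weight `ṽ = 1/w̃_v`, as a function of `t = |z|`. -/
noncomputable def vTilde (v : ℝ → ℝ) (t : ℝ) : ℝ :=
  1 / wTilde v (t : ℂ)

/-- An essential weight: `v ∼ ṽ`. -/
def Essential (v : ℝ → ℝ) : Prop :=
  ∃ C : ℝ, 1 ≤ C ∧ ∀ t : ℝ, 0 ≤ t →
    v t ≤ C * vTilde v t ∧ vTilde v t ≤ C * v t

/-- `P_v(t) = sup_j t^j/‖z^j‖_v`. -/
noncomputable def Pfun (v : ℝ → ℝ) (t : ℝ) : ℝ :=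
  ⨆ j : ℕ, t ^ j / wnorm v fun z : ℂ => z ^ j

/-- The convolved sequence `(M⋆N)_j = min_{0≤k≤j} M_k·N_{j-k}`. -/
noncomputable def convSeq (M N : ℕ → ℝ) (j : ℕ) : ℝ :=
  (Finset.range (j + 1)).inf' Finset.nonempty_range_add_one fun k => M k * N (j - k)

/-! Writing `B` for the unit ball of `H^∞_u`, both `ũ ≼ v` and `H^∞_u ⊆ H^∞_v` say that `B` is
bounded in `H^∞_v`. For the first this is the definition of `ũ` together with the rotation
invariance of `B`. If the inclusion holds, then every absolutely convergent series `∑ a_f f` over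
`f ∈ B` lies in `H^∞_u`, hence in `H^∞_v`, and the uniform boundedness principle on `ℓ¹(B)` bounds
`B` in `H^∞_v`. -/

section UniformBoundedness

variable {𝕜 ι X G : Type*} [NontriviallyNormedField 𝕜]
  [NormedAddCommGroup G] [NormedSpace 𝕜 G] [CompleteSpace G]

theorem exists_clm_lp_one_apply_eq_tsum_smul {φ : ι → G} (hφ : BddAbove (range fun i => ‖φ i‖)) :
    ∃ L : lp (fun _ : ι => 𝕜) 1 →L[𝕜] G, ∀ a, L a = ∑' i, a i • φ i := by
  obtain ⟨M, hM⟩ := hφ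
  let T (i : ι) : 𝕜 →L[𝕜] G := ContinuousLinearMap.toSpanSingleton 𝕜 (φ i)
  have hT (i : ι) : ‖T i‖ ≤ max M 0 := by
    rw [ContinuousLinearMap.norm_toSpanSingleton]
    exact (hM (mem_range_self i)).trans (le_max_left M 0)
  exact ⟨lp.tsumCLM 𝕜 ι G ∘L lp.mapCLM 1 T (le_max_right M 0) hT, fun _ => rfl⟩

theorem exists_norm_le_of_forall_tsum_smul_bounded [CompleteSpace 𝕜] {F : ι → X → G}
    (hF : ∀ x, BddAbove (range fun i => ‖F i x‖))
    (h : ∀ a : ι → 𝕜, Summable (fun i => ‖a i‖) → ∃ C, ∀ x, ‖∑' i, a i • F i x‖ ≤ C) :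
    ∃ C, ∀ i x, ‖F i x‖ ≤ C := by
  classical
  choose L hL using fun x => exists_clm_lp_one_apply_eq_tsum_smul (𝕜 := 𝕜) (hF x)
  have hL_single (i : ι) (x : X) : L x (lp.single 1 i 1) = F i x := by
    rw [hL, tsum_eq_single i fun j hj => by rw [lp.single_apply_ne 1 i 1 hj, zero_smul],
      lp.single_apply_self, one_smul]
  obtain ⟨C, hC⟩ : ∃ C, ∀ x, ‖L x‖ ≤ C := banach_steinhaus fun a => by
    simpa only [hL] using h a (by simpa using (lp.memℓp a).summable)
  refine ⟨C, fun i x => ?_⟩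
  calc ‖F i x‖ = ‖L x (lp.single 1 i 1)‖ := by rw [hL_single]
    _ ≤ ‖L x‖ * ‖lp.single (E := fun _ : ι => 𝕜) 1 i 1‖ := (L x).le_opNorm _
    _ = ‖L x‖ := by rw [lp.norm_single one_pos, norm_one, mul_one]
    _ ≤ C := hC x

end UniformBoundedness

section AssociatedWeight

variable {u : ℝ → ℝ} {f : ℂ → ℂ} {a z : ℂ} {b t C : ℝ}

theorem norm_le_wTilde (hf : f ∈ BClass u) (z : ℂ) : ‖f z‖ ≤ wTilde u z :=
  le_csSup ⟨1 / u ‖z‖, by rintro _ ⟨g, hg, rfl⟩; exact hg.2 z⟩ ⟨f, hf, rfl⟩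

theorem wTilde_le (hb : 0 ≤ b) (h : ∀ f ∈ BClass u, ‖f z‖ ≤ b) : wTilde u z ≤ b :=
  Real.sSup_le (by rintro _ ⟨f, hf, rfl⟩; exact h f hf) hb

theorem wTilde_nonneg (u : ℝ → ℝ) (z : ℂ) : 0 ≤ wTilde u z :=
  Real.sSup_nonneg (by rintro _ ⟨f, -, rfl⟩; exact norm_nonneg _)

theorem comp_mul_mem_bClass (hf : f ∈ BClass u) (ha : ‖a‖ = 1) :
    (fun z => f (a * z)) ∈ BClass u :=
  ⟨hf.1.comp (by fun_prop), fun z => by simpa [ha] using hf.2 (a * z)⟩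

theorem wTilde_mul_le (ha : ‖a‖ = 1) (z : ℂ) : wTilde u (a * z) ≤ wTilde u z :=
  wTilde_le (wTilde_nonneg u z) fun _ hf => norm_le_wTilde (comp_mul_mem_bClass hf ha) z

theorem wTilde_norm (u : ℝ → ℝ) (z : ℂ) : wTilde u ‖z‖ = wTilde u z := by
  set a := Complex.exp (z.arg * Complex.I)
  have ha : ‖a‖ = 1 := Complex.norm_exp_ofReal_mul_I _
  have haz : a * ‖z‖ = z := by rw [mul_comm]; exact Complex.norm_mul_exp_arg_mul_I z
  have haz' : a⁻¹ * z = ‖z‖ := by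
    rw [inv_mul_eq_iff_eq_mul₀ (Complex.exp_ne_zero _), haz]
  apply le_antisymm
  · simpa only [haz'] using wTilde_mul_le (u := u) (a := a⁻¹) (by rw [norm_inv, ha, inv_one]) z
  · simpa only [haz] using wTilde_mul_le (u := u) ha ‖z‖

theorem smul_mem_bClass (hu : ∀ t, 0 ≤ t → 0 < u t) (hf : Differentiable ℂ f) (hC : 0 < C)
    (h : ∀ z, ‖f z‖ * u ‖z‖ ≤ C) : C⁻¹ • f ∈ BClass u := by
  refine ⟨hf.const_smul C⁻¹, fun z => ?_⟩
  rw [Pi.smul_apply, norm_smul, Real.norm_of_nonneg (inv_nonneg.2 hC.le),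
    le_div_iff₀ (hu _ (norm_nonneg z)), mul_assoc, inv_mul_le_one₀ hC]
  exact h z

theorem wTilde_pos (hu : ∀ t, 0 ≤ t → 0 < u t) (hbdd : BddAbove (u '' Ici 0)) (z : ℂ) :
    0 < wTilde u z := by
  obtain ⟨M, hM⟩ := hbdd
  have hu_le (t : ℝ) (ht : 0 ≤ t) : u t ≤ M := hM (mem_image_of_mem u ht)
  have hM_pos : 0 < M := (hu 0 le_rfl).trans_le (hu_le 0 le_rfl)
  have hconst : M⁻¹ • (fun _ => 1 : ℂ → ℂ) ∈ BClass u :=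
    smul_mem_bClass hu (differentiable_const 1) hM_pos fun z => by
      simpa using hu_le _ (norm_nonneg z)
  calc 0 < ‖(M⁻¹ • (fun _ => 1 : ℂ → ℂ)) z‖ := by simpa using hM_pos.ne'
    _ ≤ wTilde u z := norm_le_wTilde hconst z

theorem le_mul_vTilde_iff (hw : 0 < wTilde u t) : b ≤ C * vTilde u t ↔ b * wTilde u t ≤ C := by
  rw [vTilde, mul_one_div, le_div_iff₀ hw]

theorem le_vTilde (hu : 0 < u t) (ht : 0 ≤ t) (hw : 0 < wTilde u t) : u t ≤ vTilde u t :=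
  (le_one_div hu hw).2 <| wTilde_le (one_div_nonneg.2 hu.le) fun f hf => by
    simpa only [Complex.norm_of_nonneg ht] using hf.2 t

end AssociatedWeight

section WeightLE

/-- The relation `v ≼ w` between weights, comparing them up to a constant. The order is that of
the associated spaces: `v ≼ w` bounds `w` by a multiple of `v` and so makes `H^∞_v` a subspace of
`H^∞_w`. -/
def WeightLE (v w : ℝ → ℝ) : Prop :=
  ∃ C : ℝ, 1 ≤ C ∧ ∀ t : ℝ, 0 ≤ t → w t ≤ C * v t

variable {u v w : ℝ → ℝ}

theorem WeightLE.trans (huv : WeightLE u v) (hvw : WeightLE v w) : WeightLE u w := by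
  obtain ⟨C, hC, hC_le⟩ := huv
  obtain ⟨D, hD, hD_le⟩ := hvw
  refine ⟨D * C, one_le_mul_of_one_le_of_one_le hD hC, fun t ht => ?_⟩
  calc w t ≤ D * v t := hD_le t ht
    _ ≤ D * (C * u t) := by gcongr; exact hC_le t ht
    _ = D * C * u t := (mul_assoc ..).symm

theorem Essential.weightLE_vTilde_iff (hu : Essential u) :
    WeightLE (vTilde u) v ↔ WeightLE u v := by
  obtain ⟨C, hC, h⟩ := hu
  have hle : WeightLE (vTilde u) u := ⟨C, hC, fun t ht => (h t ht).1⟩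
  have hge : WeightLE u (vTilde u) := ⟨C, hC, fun t ht => (h t ht).2⟩
  exact ⟨hge.trans, hle.trans⟩

theorem weightLE_vTilde_iff_bClass_bounded (hu : ∀ z, 0 < wTilde u z)
    (hv : ∀ t, 0 ≤ t → 0 < v t) :
    WeightLE (vTilde u) v ↔ ∃ C, ∀ f ∈ BClass u, ∀ z, ‖f z‖ * v ‖z‖ ≤ C := by
  constructor
  · rintro ⟨C, -, hC⟩
    refine ⟨C, fun f hf z => ?_⟩
    have hvz := hv _ (norm_nonneg z)
    calc ‖f z‖ * v ‖z‖ ≤ wTilde u z * v ‖z‖ := by gcongr; exact norm_le_wTilde hf z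
      _ = v ‖z‖ * wTilde u ‖z‖ := by rw [wTilde_norm, mul_comm]
      _ ≤ C := (le_mul_vTilde_iff (hu _)).1 (hC _ (norm_nonneg z))
  · rintro ⟨C, hC⟩
    refine ⟨max C 1, le_max_right C 1, fun t ht => (le_mul_vTilde_iff (hu t)).2 ?_⟩
    rw [← le_div_iff₀' (hv t ht)]
    refine wTilde_le (div_nonneg (by positivity) (hv t ht).le) fun f hf => ?_
    rw [le_div_iff₀ (hv t ht)]
    have hft : ‖f t‖ * v t ≤ C := by simpa only [Complex.norm_of_nonneg ht] using hC f hf t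
    exact hft.trans (le_max_left C 1)

theorem WeightLE.vTilde_right (hu : ∀ z, 0 < wTilde u z) (hv : ∀ t, 0 ≤ t → 0 < v t)
    (h : WeightLE (vTilde u) v) : WeightLE (vTilde u) (vTilde v) := by
  obtain ⟨C, hC⟩ := (weightLE_vTilde_iff_bClass_bounded hu hv).1 h
  have hD : 0 < max C 1 := by positivity
  refine ⟨max C 1, le_max_right C 1, fun t _ => (le_mul_vTilde_iff (hu t)).2 ?_⟩
  have hle : wTilde u t ≤ max C 1 * wTilde v t :=
    wTilde_le (mul_nonneg hD.le (wTilde_nonneg v t)) fun f hf => by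
      have hmem := smul_mem_bClass hv hf.1 hD fun z => (hC f hf z).trans (le_max_left C 1)
      have hval := norm_le_wTilde hmem t
      rwa [Pi.smul_apply, norm_smul, norm_inv, Real.norm_of_nonneg hD.le,
        inv_mul_le_iff₀ hD] at hval
  rw [vTilde, one_div_mul_eq_div]
  exact div_le_of_le_mul₀ (wTilde_nonneg v t) hD.le hle

theorem weightLE_vTilde_iff_weightLE_vTilde_vTilde (hu : ∀ z, 0 < wTilde u z)
    (hv : ∀ t, 0 ≤ t → 0 < v t) (hv' : ∀ z, 0 < wTilde v z) :
    WeightLE (vTilde u) v ↔ WeightLE (vTilde u) (vTilde v) := by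
  refine ⟨WeightLE.vTilde_right hu hv, fun h => h.trans ⟨1, le_rfl, fun t ht => ?_⟩⟩
  rw [one_mul]
  exact le_vTilde (hv t ht) ht (hv' t)

end WeightLE

section Inclusion

variable {ι : Type*} {u v : ℝ → ℝ} {F : ι → ℂ → ℂ} {a : ι → ℂ}

theorem pos_of_forall_exists_pos_le (hu : ∀ R, ∃ m > 0, ∀ t ∈ Icc 0 R, m ≤ u t) (t : ℝ)
    (ht : 0 ≤ t) : 0 < u t := by
  obtain ⟨m, hm, hmu⟩ := hu t
  exact hm.trans_le (hmu t ⟨ht, le_rfl⟩)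

theorem differentiable_tsum_smul (hu : ∀ R, ∃ m > 0, ∀ t ∈ Icc 0 R, m ≤ u t)
    (hF : ∀ i, F i ∈ BClass u) (ha : Summable fun i => ‖a i‖) :
    Differentiable ℂ fun z => ∑' i, a i • F i z := by
  intro z
  obtain ⟨m, hm, hmu⟩ := hu (‖z‖ + 1)
  have hz : Metric.ball (0 : ℂ) (‖z‖ + 1) ∈ nhds z :=
    Metric.isOpen_ball.mem_nhds (by simp)
  refine (Complex.differentiableOn_tsum_of_summable_norm (ha.mul_right (1 / m))
    (fun i => ((hF i).1.const_smul (a i)).differentiableOn) Metric.isOpen_ball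
    fun i y hy => ?_).differentiableAt hz
  have hy' : ‖y‖ ≤ ‖z‖ + 1 := (mem_ball_zero_iff.1 hy).le
  calc ‖a i • F i y‖ = ‖a i‖ * ‖F i y‖ := norm_smul _ _
    _ ≤ ‖a i‖ * (1 / u ‖y‖) := by gcongr; exact (hF i).2 y
    _ ≤ ‖a i‖ * (1 / m) := by gcongr; exact hmu _ ⟨norm_nonneg y, hy'⟩

theorem norm_tsum_smul_mul_le (hu : ∀ t, 0 ≤ t → 0 < u t) (hF : ∀ i, F i ∈ BClass u)
    (ha : Summable fun i => ‖a i‖) (z : ℂ) :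
    ‖∑' i, a i • F i z‖ * u ‖z‖ ≤ ∑' i, ‖a i‖ := by
  rw [← le_div_iff₀ (hu _ (norm_nonneg z))]
  refine tsum_of_norm_bounded (ha.hasSum.div_const (u ‖z‖)) fun i => ?_
  rw [norm_smul, div_eq_mul_one_div]
  gcongr
  exact (hF i).2 z

theorem bClass_bounded_of_hinf_subset (hu : ∀ R, ∃ m > 0, ∀ t ∈ Icc 0 R, m ≤ u t)
    (hv : ∀ t, 0 ≤ t → 0 ≤ v t) (h : Hinf u ⊆ Hinf v) :
    ∃ C, ∀ f ∈ BClass u, ∀ z, ‖f z‖ * v ‖z‖ ≤ C := by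
  have hnorm (w z : ℂ) : ‖v ‖z‖ • w‖ = ‖w‖ * v ‖z‖ := by
    rw [norm_smul, Real.norm_of_nonneg (hv _ (norm_nonneg z)), mul_comm]
  obtain ⟨C, hC⟩ : ∃ C, ∀ (f : BClass u) (z : ℂ), ‖v ‖z‖ • f.1 z‖ ≤ C := by
    refine exists_norm_le_of_forall_tsum_smul_bounded (𝕜 := ℂ) (fun z => ?_) fun a ha => ?_
    · refine ⟨1 / u ‖z‖ * v ‖z‖, ?_⟩
      rintro _ ⟨f, rfl⟩
      refine (hnorm _ z).trans_le ?_
      exact mul_le_mul_of_nonneg_right (f.2.2 z) (hv _ (norm_nonneg z))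
    · have hmem : (fun z => ∑' f : BClass u, a f • f.1 z) ∈ Hinf u :=
        ⟨differentiable_tsum_smul hu Subtype.property ha, ∑' f, ‖a f‖,
          norm_tsum_smul_mul_le (pos_of_forall_exists_pos_le hu) Subtype.property ha⟩
      obtain ⟨-, C, hC⟩ := h hmem
      refine ⟨C, fun z => ?_⟩
      simpa only [smul_comm _ (v ‖z‖), tsum_const_smul'', hnorm] using hC z
  exact ⟨C, fun f hf z => (hnorm (f z) z).symm.trans_le (hC ⟨f, hf⟩ z)⟩

theorem hinf_subset_of_bClass_bounded (hu : ∀ t, 0 ≤ t → 0 < u t)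
    (h : ∃ C, ∀ f ∈ BClass u, ∀ z, ‖f z‖ * v ‖z‖ ≤ C) : Hinf u ⊆ Hinf v := by
  obtain ⟨C, hC⟩ := h
  rintro f ⟨hf, D, hD⟩
  have hM : 0 < max D 1 := by positivity
  have hmem := smul_mem_bClass hu hf hM fun z => (hD z).trans (le_max_left D 1)
  refine ⟨hf, max D 1 * C, fun z => ?_⟩
  have hCz := hC _ hmem z
  rwa [Pi.smul_apply, norm_smul, norm_inv, Real.norm_of_nonneg hM.le, mul_assoc,
    inv_mul_le_iff₀ hM] at hCz

end Inclusion

theorem stmt3_general {u v : ℝ → ℝ} (hu_bdd : BddAbove (u '' Ici 0))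
    (hu : ∀ R, ∃ m > 0, ∀ t ∈ Icc 0 R, m ≤ u t)
    (hv_bdd : BddAbove (v '' Ici 0)) (hv : ∀ t, 0 ≤ t → 0 < v t) :
    (WeightLE (vTilde u) v ↔ WeightLE (vTilde u) (vTilde v)) ∧
      (WeightLE (vTilde u) v ↔ Hinf u ⊆ Hinf v) ∧
      (Essential u → (Hinf u ⊆ Hinf v ↔ WeightLE u v)) := by
  have hu0 := pos_of_forall_exists_pos_le hu
  have hwu := wTilde_pos hu0 hu_bdd
  have hincl : WeightLE (vTilde u) v ↔ Hinf u ⊆ Hinf v :=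
    (weightLE_vTilde_iff_bClass_bounded hwu hv).trans
      ⟨hinf_subset_of_bClass_bounded hu0,
        bClass_bounded_of_hinf_subset hu fun t ht => (hv t ht).le⟩
  exact ⟨weightLE_vTilde_iff_weightLE_vTilde_vTilde hwu hv (wTilde_pos hv hv_bdd), hincl,
    fun hess => hincl.symm.trans hess.weightLE_vTilde_iff⟩

theorem IsWeight.bddAbove {v : ℝ → ℝ} (hv : IsWeight v) : BddAbove (v '' Ici 0) :=
  hv.2.2.1.map_bddBelow subset_rfl ⟨0, fun _ => id, self_mem_Ici⟩

theorem IsWeight.exists_pos_le {v : ℝ → ℝ} (hv : IsWeight v) (R : ℝ) :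
    ∃ m > 0, ∀ t ∈ Icc 0 R, m ≤ v t := by
  refine ⟨v |R|, hv.1 _ (abs_nonneg R), fun t ht => ?_⟩
  exact hv.2.2.1 ht.1 (abs_nonneg R) (ht.2.trans (le_abs_self R))

/-- Theorem: for weights `u`, `v` the conditions `ũ ≼ v`, `ũ ≼ ṽ` and
`H^∞_u(ℂ) ⊆ H^∞_v(ℂ)` are equivalent; if `u` is essential, the inclusion holds
iff `u ≼ v`. -/
theorem stmt3 (u v : ℝ → ℝ) (hu : IsWeight u) (hv : IsWeight v) :
    ((∃ C : ℝ, 1 ≤ C ∧ ∀ t : ℝ, 0 ≤ t → v t ≤ C * vTilde u t) ↔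
      (∃ C : ℝ, 1 ≤ C ∧ ∀ t : ℝ, 0 ≤ t → vTilde v t ≤ C * vTilde u t)) ∧
    ((∃ C : ℝ, 1 ≤ C ∧ ∀ t : ℝ, 0 ≤ t → v t ≤ C * vTilde u t) ↔
      Hinf u ⊆ Hinf v) ∧
    (Essential u →
      (Hinf u ⊆ Hinf v ↔
        ∃ C : ℝ, 1 ≤ C ∧ ∀ t : ℝ, 0 ≤ t → v t ≤ C * u t)) :=
  stmt3_general hu.bddAbove hu.exists_pos_le hv.bddAbove hv.1
end

section
/- Let M and N be log-convex weight sequences. Then the following are equivalent: (i) there exists A ≥ 1 such that N_j ≤ A·M_j for all j ∈ ℕ; (ii) v_M ≼ v_N, i.e. there exists C ≥ 1 with v_N(t) ≤ C·v_M(t) for all t ≥ 0; (iii) H^∞_{v_M}(ℂ) ⊆ H^∞_{v_N}(ℂ). Consequently, H^∞_{v_M}(ℂ) = H^∞_{v_N}(ℂ) if and only if there exists C ≥ 1 with C^{−1}·N_j ≤ M_j ≤ C·N_j for all j ∈ ℕ. -/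
open Filter Set

/-!
For `t > 0`, `v_M(t)` is the infimum over `j` of `M_j / t^j`, so an inequality `N ≤ A · M` passes
to `v_N ≤ A · v_M`. Conversely, if `N` is log-convex, then `k ↦ N_k / t^k` is minimal at `k = j` for
`t = N_{j+1} / N_j`; there `N_j = t^j v_N(t) ≤ A t^j v_M(t) ≤ A M_j`.

For the spaces, every series `∑ c_j z^j` with `∑ |c_j| M_j < ∞` lies in `H^∞_{v_M}`. If it also lies
in `H^∞_{v_N}` and `c_j ≥ 0`, evaluating it where `v_N(t) = N_j / t^j` bounds `c_j N_j`. So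
multiplication by `N_j / M_j` sends nonnegative summable sequences to bounded ones, which forces
`N_j / M_j` to be bounded: otherwise put the mass `2⁻ᵏ` at an index where `N_j / M_j > 4ᵏ`.
-/

section

variable {M N : ℕ → ℝ} {v w : ℝ → ℝ} {t : ℝ}

theorem bddAbove_range_of_forall_summable_mul {r : ℕ → ℝ}
    (h : ∀ b : ℕ → ℝ, (∀ j, 0 ≤ b j) → Summable b → BddAbove (range fun j => b j * r j)) :
    BddAbove (range r) := by
  by_contra hr
  have hfreq (k : ℕ) : ∃ᶠ j in atTop, (4 : ℝ) ^ k < r j := fun hle =>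
    hr (isBoundedUnder_of_eventually_le (hle.mono fun _ => le_of_not_gt)).bddAbove_range
  obtain ⟨φ, hφ, hlarge⟩ := extraction_forall_of_frequently hfreq
  let b : ℕ → ℝ := Function.extend φ (fun k => (1 / 2) ^ k) 0
  have hbφ (k : ℕ) : b (φ k) = (1 / 2) ^ k := hφ.injective.extend_apply _ _ k
  have hb_nonneg : 0 ≤ b :=
    Function.extend_nonneg (fun k => pow_nonneg one_half_pos.le k) le_rfl
  have hb_summable : Summable b :=
    (summable_extend_zero hφ.injective).2 summable_geometric_two
  obtain ⟨B, hB⟩ := h b hb_nonneg hb_summable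
  obtain ⟨k, hk⟩ := pow_unbounded_of_one_lt B (one_lt_two : (1 : ℝ) < 2)
  refine hk.not_ge ?_
  calc (2 : ℝ) ^ k = (1 / 2) ^ k * 4 ^ k := by rw [← mul_pow]; norm_num
    _ ≤ b (φ k) * r (φ k) := by rw [hbφ]; gcongr; exact (hlarge k).le
    _ ≤ B := hB (mem_range_self _)

theorem vM_pos (M : ℕ → ℝ) (t : ℝ) : 0 < vM M t :=
  Real.exp_pos _

theorem vM_zero (M : ℕ → ℝ) : vM M 0 = 1 := by
  simp [vM, omegaM]

theorem WeightSeq.bddAbove_range_log (hM : WeightSeq M) (ht : 0 < t) :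
    BddAbove (range fun j : ℕ => Real.log (t ^ j / M j)) := by
  obtain ⟨hpos, -, hlim⟩ := hM
  have hle : ∀ᶠ j : ℕ in atTop, Real.log (t ^ j / M j) ≤ 0 := by
    filter_upwards [hlim.eventually_ge_atTop t, eventually_ne_atTop 0] with j hroot hj
    have hpow : t ^ j ≤ M j :=
      calc t ^ j ≤ (M j ^ (1 / (j : ℝ))) ^ j := pow_le_pow_left₀ ht.le hroot j
        _ = M j := by rw [one_div, Real.rpow_inv_natCast_pow (hpos j).le hj]
    exact Real.log_nonpos (div_nonneg (pow_nonneg ht.le j) (hpos j).le)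
      ((div_le_one (hpos j)).2 hpow)
  exact (isBoundedUnder_of_eventually_le hle).bddAbove_range

theorem WeightSeq.isGLB_vM (hM : WeightSeq M) (ht : 0 < t) :
    IsGLB (range fun j : ℕ => M j / t ^ j) (vM M t) := by
  have hq (j : ℕ) : 0 < M j / t ^ j := div_pos (hM.1 j) (pow_pos ht j)
  have hlog (j : ℕ) : Real.log (t ^ j / M j) = -Real.log (M j / t ^ j) := by
    rw [← Real.log_inv, inv_div]
  have hω : omegaM M t = ⨆ j : ℕ, Real.log (t ^ j / M j) := if_neg ht.ne'
  constructor
  · rintro _ ⟨j, rfl⟩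
    have hle : Real.log (t ^ j / M j) ≤ omegaM M t :=
      hω ▸ le_ciSup (hM.bddAbove_range_log ht) j
    exact (Real.le_log_iff_exp_le (hq j)).1 (by linarith [hlog j])
  · intro c hc
    rcases le_or_gt c 0 with hc0 | hc0
    · exact hc0.trans (vM_pos M t).le
    have hle : omegaM M t ≤ -Real.log c := hω ▸ ciSup_le fun j => by
      rw [hlog, neg_le_neg_iff]
      exact Real.log_le_log hc0 (hc (mem_range_self j))
    exact (Real.log_le_iff_le_exp hc0).1 (le_neg_of_le_neg hle)

theorem WeightSeq.vM_le_div_pow (hM : WeightSeq M) (ht : 0 < t) (j : ℕ) :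
    vM M t ≤ M j / t ^ j :=
  (hM.isGLB_vM ht).1 (mem_range_self j)

theorem WeightSeq.pow_mul_vM_le (hM : WeightSeq M) (ht : 0 ≤ t) (j : ℕ) :
    t ^ j * vM M t ≤ M j := by
  rcases ht.eq_or_lt with rfl | ht
  · rcases eq_or_ne j 0 with rfl | hj
    · simp [vM_zero, hM.2.1]
    · simpa [hj] using (hM.1 j).le
  · exact (le_div_iff₀' (pow_pos ht j)).1 (hM.vM_le_div_pow ht j)

theorem LogConvexSeq.monotone_ratio (hlc : LogConvexSeq M) (hpos : ∀ j, 0 < M j) :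
    Monotone fun j => M (j + 1) / M j := by
  refine monotone_nat_of_le_succ fun j => ?_
  rw [div_le_div_iff₀ (hpos _) (hpos _), ← sq, mul_comm]
  exact hlc (j + 1) (Nat.le_add_left 1 j)

theorem LogConvexSeq.exists_forall_div_pow_le (hlc : LogConvexSeq M) (hpos : ∀ j, 0 < M j)
    (j : ℕ) : ∃ t > 0, ∀ k, M j / t ^ j ≤ M k / t ^ k := by
  let t := M (j + 1) / M j
  have ht : 0 < t := div_pos (hpos _) (hpos _)
  have hratio := hlc.monotone_ratio hpos
  have hstep (k : ℕ) : M (k + 1) / t ^ (k + 1) = M k / t ^ k * (M (k + 1) / M k / t) := by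
    have hne := (hpos k).ne'
    field_simp
    ring
  have hquot (k : ℕ) : 0 ≤ M k / t ^ k := (div_pos (hpos k) (pow_pos ht k)).le
  have hanti : AntitoneOn (fun k => M k / t ^ k) (Iic j) :=
    antitoneOn_of_succ_le ordConnected_Iic fun k _ hk _ => by
      simpa only [Order.succ_eq_add_one, hstep] using
        mul_le_of_le_one_right (hquot k) ((div_le_one ht).2 (hratio hk))
  have hmono : MonotoneOn (fun k => M k / t ^ k) (Ici j) :=
    monotoneOn_of_le_succ ordConnected_Ici fun k _ hk _ => by
      simpa only [Order.succ_eq_add_one, hstep] using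
        le_mul_of_one_le_right (hquot k) ((one_le_div ht).2 (hratio hk))
  refine ⟨t, ht, fun k => ?_⟩
  rcases le_total k j with hkj | hjk
  · exact hanti hkj self_mem_Iic hkj
  · exact hmono self_mem_Ici hjk hjk

theorem LogConvexSeq.exists_div_pow_eq_vM (hlc : LogConvexSeq M) (hM : WeightSeq M) (j : ℕ) :
    ∃ t > 0, M j / t ^ j = vM M t := by
  obtain ⟨t, ht, hmin⟩ := hlc.exists_forall_div_pow_le hM.1 j
  exact ⟨t, ht, le_antisymm ((hM.isGLB_vM ht).2 (forall_mem_range.2 hmin))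
    (hM.vM_le_div_pow ht j)⟩

theorem vM_le_mul_vM_of_forall_le_mul (hM : WeightSeq M) (hN : WeightSeq N) {A : ℝ}
    (h : ∀ j, N j ≤ A * M j) (ht : 0 ≤ t) : vM N t ≤ A * vM M t := by
  have hA : 1 ≤ A := by simpa only [hM.2.1, hN.2.1, mul_one] using h 0
  rcases ht.eq_or_lt with rfl | ht
  · simpa only [vM_zero, mul_one] using hA
  rw [← div_le_iff₀' (by positivity)]
  refine (hM.isGLB_vM ht).2 (forall_mem_range.2 fun j => ?_)
  rw [div_le_iff₀' (by positivity), ← mul_div_assoc]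
  exact (hN.vM_le_div_pow ht j).trans (by gcongr; exact h j)

theorem forall_vM_le_mul_vM_iff (hM : WeightSeq M) (hN : WeightSeq N) (hNlc : LogConvexSeq N)
    {A : ℝ} : (∀ t, 0 ≤ t → vM N t ≤ A * vM M t) ↔ ∀ j, N j ≤ A * M j := by
  refine ⟨fun h j => ?_, fun h t ht => vM_le_mul_vM_of_forall_le_mul hM hN h ht⟩
  obtain ⟨t, ht, hattained⟩ := hNlc.exists_div_pow_eq_vM hN j
  have hA : 0 < A := pos_of_mul_pos_left ((vM_pos N t).trans_le (h t ht.le)) (vM_pos M t).le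
  rw [← div_le_div_iff_of_pos_right (pow_pos ht j)]
  calc N j / t ^ j = vM N t := hattained
    _ ≤ A * vM M t := h t ht.le
    _ ≤ A * (M j / t ^ j) := by gcongr; exact hM.vM_le_div_pow ht j
    _ = A * M j / t ^ j := (mul_div_assoc _ _ _).symm

theorem Hinf_subset_of_le_mul {C : ℝ} (hC : 0 ≤ C) (h : ∀ t, 0 ≤ t → w t ≤ C * v t) :
    Hinf v ⊆ Hinf w := by
  rintro f ⟨hf, K, hK⟩
  refine ⟨hf, C * K, fun z => ?_⟩
  calc ‖f z‖ * w ‖z‖ ≤ ‖f z‖ * (C * v ‖z‖) := by gcongr; exact h _ (norm_nonneg z)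
    _ = C * (‖f z‖ * v ‖z‖) := mul_left_comm _ _ _
    _ ≤ C * K := by gcongr; exact hK z

theorem norm_mul_pow_le_div {R a m : ℝ} {j : ℕ} (ha : 0 < a) (hm : R ^ j * a ≤ m)
    (c : ℂ) {z : ℂ} (hz : ‖z‖ ≤ R) : ‖c * z ^ j‖ ≤ ‖c‖ * m / a := by
  have hpow : ‖z‖ ^ j ≤ m / a :=
    (pow_le_pow_left₀ (norm_nonneg z) hz j).trans ((le_div_iff₀ ha).2 hm)
  rw [norm_mul, norm_pow, mul_div_assoc]
  gcongr

theorem tsum_mul_pow_mem_Hinf (hv : ∀ t, 0 ≤ t → 0 < v t)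
    (hM : ∀ t, 0 ≤ t → ∀ j, t ^ j * v t ≤ M j) {c : ℕ → ℂ}
    (hc : Summable fun j => ‖c j‖ * M j) : (fun z => ∑' j, c j * z ^ j) ∈ Hinf v := by
  have hterm {R : ℝ} (hR : 0 ≤ R) (j : ℕ) {z : ℂ} (hz : ‖z‖ ≤ R) :
      ‖c j * z ^ j‖ ≤ ‖c j‖ * M j / v R :=
    norm_mul_pow_le_div (hv R hR) (hM R hR j) (c j) hz
  refine ⟨fun z => ?_, ∑' j, ‖c j‖ * M j, fun z => ?_⟩
  · have hball : DifferentiableOn ℂ (fun z => ∑' j, c j * z ^ j) (Metric.ball 0 (‖z‖ + 1)) :=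
      Complex.differentiableOn_tsum_of_summable_norm (hc.div_const _)
        (fun j => by fun_prop) Metric.isOpen_ball
        fun j y hy => hterm (by positivity) j (mem_ball_zero_iff.1 hy).le
    exact hball.differentiableAt (Metric.isOpen_ball.mem_nhds (by simp))
  · rw [← le_div_iff₀ (hv _ (norm_nonneg z))]
    exact tsum_of_norm_bounded (hc.hasSum.div_const _) fun j => hterm (norm_nonneg z) j le_rfl

theorem mul_pow_le_norm_tsum {c : ℕ → ℝ} (hc : ∀ j, 0 ≤ c j) (ht : 0 ≤ t)
    (hsum : Summable fun j => c j * t ^ j) (j : ℕ) :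
    c j * t ^ j ≤ ‖∑' i, (c i : ℂ) * (t : ℂ) ^ i‖ := by
  have hterm (i : ℕ) : 0 ≤ c i * t ^ i := mul_nonneg (hc i) (pow_nonneg ht i)
  have hcast : ∑' i, (c i : ℂ) * (t : ℂ) ^ i = ((∑' i, c i * t ^ i : ℝ) : ℂ) := by
    push_cast
    rfl
  rw [hcast, Complex.norm_of_nonneg (tsum_nonneg hterm)]
  exact hsum.le_tsum j fun i _ => hterm i

theorem bddAbove_range_mul_of_Hinf_subset (hv : ∀ t, 0 ≤ t → 0 < v t)
    (hM : ∀ t, 0 ≤ t → ∀ j, t ^ j * v t ≤ M j) (hw : ∀ t, 0 ≤ t → 0 ≤ w t)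
    (hN : ∀ j, ∃ t, 0 ≤ t ∧ N j ≤ t ^ j * w t) (hsub : Hinf v ⊆ Hinf w)
    {c : ℕ → ℝ} (hc : ∀ j, 0 ≤ c j) (hsum : Summable fun j => c j * M j) :
    BddAbove (range fun j => c j * N j) := by
  have hnorm (j : ℕ) : ‖(c j : ℂ)‖ = c j := Complex.norm_of_nonneg (hc j)
  obtain ⟨-, C, hC⟩ := hsub (tsum_mul_pow_mem_Hinf hv hM (c := fun j => (c j : ℂ))
    (by simpa only [hnorm] using hsum))
  refine ⟨C, forall_mem_range.2 fun j => ?_⟩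
  obtain ⟨t, ht, hNt⟩ := hN j
  have hsum_t : Summable fun i => c i * t ^ i :=
    (hsum.div_const (v t)).of_nonneg_of_le (fun i => mul_nonneg (hc i) (pow_nonneg ht i))
      fun i => by
        rw [le_div_iff₀ (hv t ht), mul_assoc]
        exact mul_le_mul_of_nonneg_left (hM t ht i) (hc i)
  calc c j * N j ≤ c j * (t ^ j * w t) := mul_le_mul_of_nonneg_left hNt (hc j)
    _ = c j * t ^ j * w t := (mul_assoc _ _ _).symm
    _ ≤ ‖∑' i, (c i : ℂ) * (t : ℂ) ^ i‖ * w t :=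
      mul_le_mul_of_nonneg_right (mul_pow_le_norm_tsum hc ht hsum_t j) (hw t ht)
    _ ≤ C := by simpa only [Complex.norm_of_nonneg ht] using hC t

theorem bddAbove_range_div_of_Hinf_subset (hMpos : ∀ j, 0 < M j) (hv : ∀ t, 0 ≤ t → 0 < v t)
    (hM : ∀ t, 0 ≤ t → ∀ j, t ^ j * v t ≤ M j) (hw : ∀ t, 0 ≤ t → 0 ≤ w t)
    (hN : ∀ j, ∃ t, 0 ≤ t ∧ N j ≤ t ^ j * w t) (hsub : Hinf v ⊆ Hinf w) :
    BddAbove (range fun j => N j / M j) := by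
  refine bddAbove_range_of_forall_summable_mul fun b hb hsum => ?_
  have hbdd := bddAbove_range_mul_of_Hinf_subset hv hM hw hN hsub
    (c := fun j => b j / M j) (fun j => div_nonneg (hb j) (hMpos j).le)
    (by simpa only [div_mul_cancel₀ _ (hMpos _).ne'] using hsum)
  simpa only [div_mul_eq_mul_div, mul_div_assoc] using hbdd

theorem Hinf_vM_subset_iff (hM : WeightSeq M) (hN : WeightSeq N) (hNlc : LogConvexSeq N) :
    Hinf (vM M) ⊆ Hinf (vM N) ↔ ∃ A : ℝ, 1 ≤ A ∧ ∀ j, N j ≤ A * M j := by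
  constructor
  · intro hsub
    obtain ⟨B, hB⟩ := bddAbove_range_div_of_Hinf_subset hM.1 (fun t _ => vM_pos M t)
      (fun t ht => hM.pow_mul_vM_le ht) (fun t _ => (vM_pos N t).le)
      (fun j => by
        obtain ⟨t, ht, hattained⟩ := hNlc.exists_div_pow_eq_vM hN j
        exact ⟨t, ht.le, (div_le_iff₀' (pow_pos ht j)).1 hattained.le⟩) hsub
    have hle (j : ℕ) : N j ≤ B * M j := (div_le_iff₀ (hM.1 j)).1 (hB (mem_range_self j))
    exact ⟨B, by simpa only [hM.2.1, hN.2.1, mul_one] using hle 0, hle⟩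
  · rintro ⟨A, hA, h⟩
    exact Hinf_subset_of_le_mul (zero_le_one.trans hA)
      fun t ht => vM_le_mul_vM_of_forall_le_mul hM hN h ht

theorem Hinf_vM_eq_iff (hM : WeightSeq M) (hMlc : LogConvexSeq M)
    (hN : WeightSeq N) (hNlc : LogConvexSeq N) :
    Hinf (vM M) = Hinf (vM N) ↔
      ∃ C : ℝ, 1 ≤ C ∧ ∀ j, C⁻¹ * N j ≤ M j ∧ M j ≤ C * N j := by
  rw [Subset.antisymm_iff, Hinf_vM_subset_iff hM hN hNlc, Hinf_vM_subset_iff hN hM hMlc]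
  constructor
  · rintro ⟨⟨A, hA, hNM⟩, B, -, hMN⟩
    refine ⟨max A B, le_max_of_le_left hA, fun j => ⟨?_, ?_⟩⟩
    · rw [inv_mul_le_iff₀ (by positivity)]
      exact (hNM j).trans (mul_le_mul_of_nonneg_right (le_max_left A B) (hM.1 j).le)
    · exact (hMN j).trans (mul_le_mul_of_nonneg_right (le_max_right A B) (hN.1 j).le)
  · rintro ⟨C, hC, h⟩
    exact ⟨⟨C, hC, fun j => (inv_mul_le_iff₀ (by positivity)).1 (h j).1⟩,
      C, hC, fun j => (h j).2⟩

end

/-- Theorem: for log-convex weight sequences `M`, `N` the conditions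
`N_j ≤ A·M_j`, `v_M ≼ v_N` and `H^∞_{v_M}(ℂ) ⊆ H^∞_{v_N}(ℂ)` are equivalent;
consequently equality of the spaces is equivalent to
`C⁻¹·N_j ≤ M_j ≤ C·N_j`. -/
theorem stmt6 (M N : ℕ → ℝ) (hM : WeightSeq M) (hMlc : LogConvexSeq M)
    (hN : WeightSeq N) (hNlc : LogConvexSeq N) :
    ((∃ A : ℝ, 1 ≤ A ∧ ∀ j : ℕ, N j ≤ A * M j) ↔
      (∃ C : ℝ, 1 ≤ C ∧ ∀ t : ℝ, 0 ≤ t → vM N t ≤ C * vM M t)) ∧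
    ((∃ A : ℝ, 1 ≤ A ∧ ∀ j : ℕ, N j ≤ A * M j) ↔
      Hinf (vM M) ⊆ Hinf (vM N)) ∧
    (Hinf (vM M) = Hinf (vM N) ↔
      ∃ C : ℝ, 1 ≤ C ∧ ∀ j : ℕ, C⁻¹ * N j ≤ M j ∧ M j ≤ C * N j) := by
  refine ⟨?_, (Hinf_vM_subset_iff hM hN hNlc).symm, Hinf_vM_eq_iff hM hMlc hN hNlc⟩
  exact exists_congr fun A => and_congr_right fun _ => (forall_vM_le_mul_vM_iff hM hN hNlc).symm
end

section
/- Let u and w be normalized weights with u convex, and assume that H^∞_u(ℂ) ⊆ H^∞_w(ℂ) as sets. Then: (i) there exists a ≥ 1 such that w(t)² ≤ a·u(t) for all t ≥ 0; (ii) if in addition u or w is of moderate growth, then there exist a ≥ 1 and b ≥ 1 such that w(a·t) ≤ b·u(t) for all t ≥ 0. -/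
open Filter Set

/-!
A gliding hump shows that an inclusion `Hinf u ⊆ Hinf w` is bounded on monomials:
`sup t ^ j * w t ≤ C * sup x ^ j * u x` with `C` independent of `j`, since otherwise a suitable
power series with nonnegative coefficients lies in `Hinf u` but not in `Hinf w`.

Log-convexity of `u` says that every `t > 0` maximizes `x ^ p * u x` for some real `p ≥ 0`, the
slope of a supporting line of `s ↦ -log u(e ^ s)` at `log t`. Rounding `p` down to an integer `j`
costs one factor `t`, so the monomial estimate gives `w t ≤ C' * (1 + t) * u t`. The monomials
`1` and `z` show that `(1 + t) * w t` is bounded, so multiplying by `w t` yields `w ^ 2 ≤ a * u`,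
and moderate growth of either weight trades the square for a dilation.
-/

section Convexity

theorem exists_forall_add_slope_mul_le {s : Set ℝ} {f : ℝ → ℝ} (hf : ConvexOn ℝ s f) {x : ℝ}
    (hx : x ∈ interior s) : ∃ p : ℝ, ∀ y ∈ s, f x + p * (y - x) ≤ f y := by
  refine ⟨derivWithin f (Ioi x) x, fun y hy => ?_⟩
  rcases lt_trichotomy y x with hyx | rfl | hxy
  · have hslope : slope f y x ≤ derivWithin f (Ioi x) x :=
      (hf.slope_le_leftDeriv_of_mem_interior hy hx hyx).trans
        (hf.leftDeriv_le_rightDeriv_of_mem_interior hx)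
    rw [slope_def_field, div_le_iff₀ (sub_pos.2 hyx)] at hslope
    linarith
  · simp
  · have hslope := hf.rightDeriv_le_slope_of_mem_interior hx hy hxy
    rw [slope_def_field, le_div_iff₀ (sub_pos.2 hxy)] at hslope
    linarith

variable {u : ℝ → ℝ}

theorem exists_forall_rpow_mul_le_rpow_mul (hu_pos : ∀ t, 0 ≤ t → 0 < u t)
    (hu_anti : AntitoneOn u (Ici 0)) (huc : ConvexWeight u) {t : ℝ} (ht : 0 < t) :
    ∃ p : ℝ, 0 ≤ p ∧ ∀ x, 0 < x → x ^ p * u x ≤ t ^ p * u t := by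
  obtain ⟨p, hp⟩ := exists_forall_add_slope_mul_le huc (x := Real.log t) (by simp)
  have support : ∀ x, 0 < x →
      -Real.log (u t) + p * (Real.log x - Real.log t) ≤ -Real.log (u x) := fun x hx => by
    simpa only [Real.exp_log ht, Real.exp_log hx] using hp (Real.log x) (mem_univ _)
  refine ⟨p, ?_, fun x hx => ?_⟩
  · have hlog_u : Real.log (u t) ≤ Real.log (u (t / Real.exp 1)) :=
      Real.log_le_log (hu_pos t ht.le) (hu_anti (mem_Ici.2 (by positivity)) ht.le
        (div_le_self ht.le (Real.one_le_exp zero_le_one)))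
    have hsupp := support (t / Real.exp 1) (by positivity)
    rw [Real.log_div ht.ne' (Real.exp_ne_zero 1), Real.log_exp] at hsupp
    linarith
  · have hux := hu_pos x hx.le
    have hut := hu_pos t ht.le
    rw [← Real.log_le_log_iff (by positivity) (by positivity),
      Real.log_mul (by positivity) hux.ne', Real.log_mul (by positivity) hut.ne',
      Real.log_rpow hx, Real.log_rpow ht]
    linarith [support x hx]

theorem exists_forall_pow_mul_le_pow_succ_mul (hu_pos : ∀ t, 0 ≤ t → 0 < u t)
    (hu_anti : AntitoneOn u (Ici 0)) (huc : ConvexWeight u) {t : ℝ} (ht : 1 ≤ t) :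
    ∃ j : ℕ, ∀ x, 0 ≤ x → x ^ j * u x ≤ u 0 / u 1 * (t ^ (j + 1) * u t) := by
  have ht0 : 0 < t := zero_lt_one.trans_le ht
  have hu1 : 0 < u 1 := hu_pos 1 zero_le_one
  have hone : 1 ≤ u 0 / u 1 :=
    (one_le_div hu1).2 (hu_anti self_mem_Ici (mem_Ici.2 zero_le_one) zero_le_one)
  obtain ⟨p, hp, hmax⟩ := exists_forall_rpow_mul_le_rpow_mul hu_pos hu_anti huc ht0
  have hmax_floor : ∀ x, 1 ≤ x → x ^ ⌊p⌋₊ * u x ≤ t ^ (⌊p⌋₊ + 1) * u t := fun x hx => by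
    have hx0 : 0 < x := zero_lt_one.trans_le hx
    calc x ^ ⌊p⌋₊ * u x ≤ x ^ p * u x := by
          refine mul_le_mul_of_nonneg_right ?_ (hu_pos x hx0.le).le
          rw [← Real.rpow_natCast]
          exact Real.rpow_le_rpow_of_exponent_le hx (Nat.floor_le hp)
      _ ≤ t ^ p * u t := hmax x hx0
      _ ≤ t ^ (⌊p⌋₊ + 1) * u t := by
          refine mul_le_mul_of_nonneg_right ?_ (hu_pos t ht0.le).le
          rw [← Real.rpow_natCast, Nat.cast_succ]
          exact Real.rpow_le_rpow_of_exponent_le ht (Nat.lt_floor_add_one p).le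
  refine ⟨⌊p⌋₊, fun x hx => ?_⟩
  rcases le_total x 1 with hx1 | hx1
  · calc x ^ ⌊p⌋₊ * u x ≤ 1 * u 0 :=
          mul_le_mul (pow_le_one₀ hx hx1) (hu_anti self_mem_Ici hx hx) (hu_pos x hx).le zero_le_one
      _ = u 0 / u 1 * (1 ^ ⌊p⌋₊ * u 1) := by
          rw [one_pow, one_mul, one_mul, div_mul_cancel₀ _ hu1.ne']
      _ ≤ u 0 / u 1 * (t ^ (⌊p⌋₊ + 1) * u t) :=
          mul_le_mul_of_nonneg_left (hmax_floor 1 le_rfl) (zero_le_one.trans hone)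
  · refine (hmax_floor x hx1).trans (le_mul_of_one_le_left ?_ hone)
    have := hu_pos t ht0.le
    positivity

end Convexity

section Inclusion

variable {ι : Type*} {u w : ℝ → ℝ}

theorem tsum_mem_Hinf (hu_pos : ∀ t, 0 ≤ t → 0 < u t) (hu_anti : AntitoneOn u (Ici 0))
    {F : ι → ℂ → ℂ} {a : ι → ℝ} (hF : ∀ i, Differentiable ℂ (F i)) (ha : Summable a)
    (hFa : ∀ i z, ‖F i z‖ * u ‖z‖ ≤ a i) : (fun z => ∑' i, F i z) ∈ Hinf u := by
  have hF_le : ∀ i z r, ‖z‖ ≤ r → ‖F i z‖ ≤ a i / u r := fun i z r hzr => by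
    have hr : 0 ≤ r := (norm_nonneg z).trans hzr
    rw [le_div_iff₀ (hu_pos r hr)]
    refine le_trans ?_ (hFa i z)
    gcongr
    exact hu_anti (norm_nonneg z) hr hzr
  refine ⟨fun z => ?_, ∑' i, a i, fun z => ?_⟩
  · refine (Complex.differentiableOn_tsum_of_summable_norm (ha.div_const (u (‖z‖ + 1)))
      (fun i => (hF i).differentiableOn) Metric.isOpen_ball
      fun i y hy => hF_le i y _ (mem_ball_zero_iff.1 hy).le).differentiableAt
      (Metric.isOpen_ball.mem_nhds ?_)
    simp
  · rw [← le_div_iff₀ (hu_pos _ (norm_nonneg z))]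
    exact tsum_of_norm_bounded (ha.hasSum.div_const _) fun i => hF_le i z _ le_rfl

theorem le_norm_tsum_ofReal {a : ι → ℝ} (ha : Summable a) (ha0 : ∀ i, 0 ≤ a i) (i : ι) :
    a i ≤ ‖∑' k, (a k : ℂ)‖ := by
  rw [← Complex.ofReal_tsum, Complex.norm_real, Real.norm_of_nonneg (tsum_nonneg ha0)]
  exact ha.le_tsum i fun k _ => ha0 k

theorem exists_forall_coeff_mul_pow_mul_le_of_Hinf_subset (hu_pos : ∀ t, 0 ≤ t → 0 < u t)
    (hu_anti : AntitoneOn u (Ici 0)) (hw : ∀ t, 0 ≤ t → 0 ≤ w t) (h : Hinf u ⊆ Hinf w)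
    {c a : ι → ℝ} {j : ι → ℕ} (hc : ∀ i, 0 ≤ c i) (ha : Summable a)
    (hca : ∀ i x, 0 ≤ x → c i * x ^ j i * u x ≤ a i) :
    ∃ C, ∀ i t, 0 ≤ t → c i * t ^ j i * w t ≤ C := by
  have hmem : (fun z : ℂ => ∑' i, (c i : ℂ) * z ^ j i) ∈ Hinf u :=
    tsum_mem_Hinf hu_pos hu_anti (fun i => (differentiable_id.pow _).const_mul _) ha fun i z => by
      simpa only [norm_mul, norm_pow, Complex.norm_real, Real.norm_of_nonneg (hc i)]
        using hca i ‖z‖ (norm_nonneg z)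
  obtain ⟨-, C, hC⟩ := h hmem
  refine ⟨C, fun i t ht => ?_⟩
  have hterm : ∀ k, 0 ≤ c k * t ^ j k := fun k => mul_nonneg (hc k) (pow_nonneg ht _)
  have hsum : Summable fun k => c k * t ^ j k :=
    .of_nonneg_of_le hterm (fun k => (le_div_iff₀ (hu_pos t ht)).2 (hca k t ht)) (ha.div_const _)
  calc c i * t ^ j i * w t ≤ ‖∑' k, ((c k * t ^ j k : ℝ) : ℂ)‖ * w t :=
        mul_le_mul_of_nonneg_right (le_norm_tsum_ofReal hsum hterm i) (hw t ht)
    _ ≤ C := by simpa [abs_of_nonneg ht] using hC t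

theorem exists_forall_pow_mul_le_of_Hinf_subset (hu_pos : ∀ t, 0 ≤ t → 0 < u t)
    (hu_anti : AntitoneOn u (Ici 0)) (hw : ∀ t, 0 ≤ t → 0 ≤ w t) (h : Hinf u ⊆ Hinf w) :
    ∃ C, 0 ≤ C ∧ ∀ (j : ℕ) (K : ℝ), (∀ x, 0 ≤ x → x ^ j * u x ≤ K) →
      ∀ t, 0 ≤ t → t ^ j * w t ≤ C * K := by
  by_contra! hcon
  choose j K hK t ht hlt using fun n : ℕ => hcon (4 ^ n) (by positivity)
  have hK0 : ∀ n, 0 < K n := fun n =>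
    (hu_pos 1 zero_le_one).trans_le (by simpa using hK n 1 zero_le_one)
  obtain ⟨C, hC⟩ := exists_forall_coeff_mul_pow_mul_le_of_Hinf_subset hu_pos hu_anti hw h
    (c := fun n => (1 / 2) ^ n / K n) (j := j) (fun n => by have := hK0 n; positivity)
    summable_geometric_two fun n x hx => by
      rw [mul_assoc, div_mul_eq_mul_div, div_le_iff₀ (hK0 n)]
      gcongr
      exact hK n x hx
  obtain ⟨n, hn⟩ := pow_unbounded_of_one_lt C one_lt_two
  refine hn.not_ge (le_trans ?_ (hC n (t n) (ht n)))
  have := hK0 n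
  calc (2 : ℝ) ^ n = (1 / 2) ^ n / K n * (4 ^ n * K n) := by
        rw [div_mul_eq_mul_div, eq_div_iff this.ne', ← mul_assoc, ← mul_pow]
        norm_num
    _ ≤ (1 / 2) ^ n / K n * (t n ^ j n * w (t n)) :=
        mul_le_mul_of_nonneg_left (hlt n).le (by positivity)
    _ = (1 / 2) ^ n / K n * t n ^ j n * w (t n) := (mul_assoc ..).symm

theorem exists_forall_le_mul_one_add_mul_of_Hinf_subset (hu_pos : ∀ t, 0 ≤ t → 0 < u t)
    (hu_anti : AntitoneOn u (Ici 0)) (huc : ConvexWeight u) (hw : ∀ t, 0 ≤ t → 0 ≤ w t)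
    (h : Hinf u ⊆ Hinf w) :
    ∃ C, 0 ≤ C ∧ ∀ t, 0 ≤ t → w t ≤ C * ((1 + t) * u t) := by
  obtain ⟨C, hC0, hC⟩ := exists_forall_pow_mul_le_of_Hinf_subset hu_pos hu_anti hw h
  have hu0 := hu_pos 0 le_rfl
  have hu1 := hu_pos 1 zero_le_one
  refine ⟨C * (u 0 / u 1), by positivity, fun t ht => ?_⟩
  have hut := hu_pos t ht
  rcases le_total t 1 with ht1 | ht1
  · have hwt : w t ≤ C * u 0 := by
      simpa using hC 0 (u 0) (fun x hx => by simpa using hu_anti self_mem_Ici hx hx) t ht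
    have hu1t : u 1 ≤ u t := hu_anti ht (mem_Ici.2 zero_le_one) ht1
    calc w t ≤ C * u 0 := hwt
      _ = C * (u 0 / u 1) * (1 * u 1) := by field_simp
      _ ≤ C * (u 0 / u 1) * ((1 + t) * u t) := by gcongr; linarith
  · obtain ⟨j, hj⟩ := exists_forall_pow_mul_le_pow_succ_mul hu_pos hu_anti huc ht1
    have ht0 : 0 < t ^ j := by positivity
    have hwt : w t ≤ C * (u 0 / u 1) * (t * u t) := by
      refine le_of_mul_le_mul_left ((hC j _ hj t ht).trans_eq ?_) ht0
      ring
    refine hwt.trans ?_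
    gcongr
    linarith

theorem exists_forall_one_add_mul_le_of_Hinf_subset (hu_pos : ∀ t, 0 ≤ t → 0 < u t)
    (hu_anti : AntitoneOn u (Ici 0)) (hu_bdd : ∃ B, ∀ t, 0 ≤ t → t * u t ≤ B)
    (hw : ∀ t, 0 ≤ t → 0 ≤ w t) (h : Hinf u ⊆ Hinf w) :
    ∃ B, ∀ t, 0 ≤ t → (1 + t) * w t ≤ B := by
  obtain ⟨C, -, hC⟩ := exists_forall_pow_mul_le_of_Hinf_subset hu_pos hu_anti hw h
  obtain ⟨B, hB⟩ := hu_bdd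
  refine ⟨C * u 0 + C * B, fun t ht => ?_⟩
  have h0 := hC 0 (u 0) (fun x hx => by simpa using hu_anti self_mem_Ici hx hx) t ht
  have h1 := hC 1 B (by simpa using hB) t ht
  linarith

theorem exists_forall_sq_le_mul_of_Hinf_subset (hu_pos : ∀ t, 0 ≤ t → 0 < u t)
    (hu_anti : AntitoneOn u (Ici 0)) (huc : ConvexWeight u)
    (hu_bdd : ∃ B, ∀ t, 0 ≤ t → t * u t ≤ B) (hw : ∀ t, 0 ≤ t → 0 ≤ w t)
    (h : Hinf u ⊆ Hinf w) :
    ∃ a, 1 ≤ a ∧ ∀ t, 0 ≤ t → w t ^ 2 ≤ a * u t := by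
  obtain ⟨C, hC0, hC⟩ := exists_forall_le_mul_one_add_mul_of_Hinf_subset hu_pos hu_anti huc hw h
  obtain ⟨B, hB⟩ := exists_forall_one_add_mul_le_of_Hinf_subset hu_pos hu_anti hu_bdd hw h
  refine ⟨max 1 (C * B), le_max_left _ _, fun t ht => ?_⟩
  have hut := hu_pos t ht
  have hwt := hw t ht
  calc w t ^ 2 = w t * w t := sq _
    _ ≤ C * ((1 + t) * u t) * w t := by gcongr; exact hC t ht
    _ = C * ((1 + t) * w t) * u t := by ring
    _ ≤ C * B * u t := by gcongr; exact hB t ht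
    _ ≤ max 1 (C * B) * u t := by gcongr; exact le_max_right _ _

end Inclusion

section ModerateGrowth

variable {u w : ℝ → ℝ} {a : ℝ}

theorem exists_dilation_le_of_sq_le_of_moderateGrowth_left (hu : ModerateGrowthW u)
    (hu0 : ∀ t, 0 ≤ t → 0 ≤ u t) (ha : 1 ≤ a) (hsq : ∀ t, 0 ≤ t → w t ^ 2 ≤ a * u t) :
    ∃ b, 1 ≤ b ∧ ∃ c, 1 ≤ c ∧ ∀ t, 0 ≤ t → w (b * t) ≤ c * u t := by
  obtain ⟨H, hH, hmg⟩ := hu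
  have hc : 1 ≤ a * Real.exp H := one_le_mul_of_one_le_of_one_le ha (Real.one_le_exp (by linarith))
  refine ⟨H, hH, a * Real.exp H, hc, fun t ht => ?_⟩
  have hut := hu0 t ht
  refine le_of_sq_le_sq ?_ (by positivity)
  calc w (H * t) ^ 2 ≤ a * u (H * t) := hsq _ (by positivity)
    _ ≤ a * (Real.exp H * u t ^ 2) := by gcongr; exact hmg t ht
    _ = a * Real.exp H * u t ^ 2 := (mul_assoc ..).symm
    _ ≤ (a * Real.exp H) ^ 2 * u t ^ 2 := by gcongr; exact le_self_pow₀ hc two_ne_zero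
    _ = (a * Real.exp H * u t) ^ 2 := (mul_pow ..).symm

theorem exists_dilation_le_of_sq_le_of_moderateGrowth_right (hw : ModerateGrowthW w)
    (ha : 1 ≤ a) (hsq : ∀ t, 0 ≤ t → w t ^ 2 ≤ a * u t) :
    ∃ b, 1 ≤ b ∧ ∃ c, 1 ≤ c ∧ ∀ t, 0 ≤ t → w (b * t) ≤ c * u t := by
  obtain ⟨H, hH, hmg⟩ := hw
  refine ⟨H, hH, Real.exp H * a,
    one_le_mul_of_one_le_of_one_le (Real.one_le_exp (by linarith)) ha, fun t ht => ?_⟩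
  calc w (H * t) ≤ Real.exp H * w t ^ 2 := hmg t ht
    _ ≤ Real.exp H * (a * u t) := by gcongr; exact hsq t ht
    _ = Real.exp H * a * u t := (mul_assoc ..).symm

end ModerateGrowth

theorem IsWeight.exists_forall_mul_le {v : ℝ → ℝ} (hv : IsWeight v) :
    ∃ B, ∀ t, 0 ≤ t → t * v t ≤ B := by
  obtain ⟨hpos, -, hanti, hdecay⟩ := hv
  obtain ⟨T, hT⟩ := eventually_atTop.1 ((hdecay 1).eventually (eventually_le_nhds zero_lt_one))
  refine ⟨max 1 (T * v 0), fun t ht => ?_⟩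
  rcases le_total T t with hTt | htT
  · exact le_max_of_le_left (by simpa using hT t hTt)
  · exact le_max_of_le_right
      (mul_le_mul htT (hanti self_mem_Ici ht ht) (hpos t ht).le (ht.trans htT))

theorem stmt12_general (u w : ℝ → ℝ) (hu_pos : ∀ t, 0 ≤ t → 0 < u t)
    (hu_anti : AntitoneOn u (Ici 0)) (huc : ConvexWeight u)
    (hu_bdd : ∃ B, ∀ t, 0 ≤ t → t * u t ≤ B) (hw : ∀ t, 0 ≤ t → 0 ≤ w t)
    (h : Hinf u ⊆ Hinf w) :
    (∃ a : ℝ, 1 ≤ a ∧ ∀ t : ℝ, 0 ≤ t → (w t) ^ 2 ≤ a * u t) ∧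
    ((ModerateGrowthW u ∨ ModerateGrowthW w) →
      ∃ a : ℝ, 1 ≤ a ∧ ∃ b : ℝ, 1 ≤ b ∧
        ∀ t : ℝ, 0 ≤ t → w (a * t) ≤ b * u t) := by
  obtain ⟨a, ha, hsq⟩ :=
    exists_forall_sq_le_mul_of_Hinf_subset hu_pos hu_anti huc hu_bdd hw h
  refine ⟨⟨a, ha, hsq⟩, ?_⟩
  rintro (hu_mg | hw_mg)
  · exact exists_dilation_le_of_sq_le_of_moderateGrowth_left hu_mg (fun t ht => (hu_pos t ht).le)
      ha hsq
  · exact exists_dilation_le_of_sq_le_of_moderateGrowth_right hw_mg ha hsq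

/-- Proposition: for normalized weights `u`, `w` with `u` convex and
`H^∞_u(ℂ) ⊆ H^∞_w(ℂ)`: (i) `w² ≤ a·u`; (ii) if moreover `u` or `w` is of
moderate growth, then `w(a·t) ≤ b·u(t)`. -/
theorem stmt12 (u w : ℝ → ℝ) (hu : IsWeight u) (hun : NormalizedWeight u)
    (huc : ConvexWeight u) (hw : IsWeight w) (hwn : NormalizedWeight w)
    (h : Hinf u ⊆ Hinf w) :
    (∃ a : ℝ, 1 ≤ a ∧ ∀ t : ℝ, 0 ≤ t → (w t) ^ 2 ≤ a * u t) ∧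
    ((ModerateGrowthW u ∨ ModerateGrowthW w) →
      ∃ a : ℝ, 1 ≤ a ∧ ∃ b : ℝ, 1 ≤ b ∧
        ∀ t : ℝ, 0 ≤ t → w (a * t) ≤ b * u t) :=
  stmt12_general u w hu.1 hu.2.2.1 huc hu.exists_forall_mul_le (fun t ht => (hw.1 t ht).le) h
end

section
/- Let u and w be normalized weights with u convex, and assume that u or w is of moderate growth. Then the following are equivalent: (i) there exist c ≥ 1 and C ≥ 1 with w(c·t) ≤ C·u(t) for all t ≥ 0; (ii) ⋃_{n∈ℕ, n≥1} H^∞_{u_n}(ℂ) ⊆ ⋃_{n∈ℕ, n≥1} H^∞_{w_n}(ℂ), where u_c(t) := u(c·t); (iii) ⋂_{c>0} H^∞_{u_c}(ℂ) ⊆ ⋂_{c>0} H^∞_{w_c}(ℂ). -/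
open Filter Set

/-!
Both inclusions are tested on entire functions `∑ₖ bₖ z ^ pₖ` with `bₖ ≥ 0`. Such a function is
at least as large as each of its terms on the positive real axis, so its membership in a dilate
of `H^∞_w(ℂ)` bounds the moments `M^w_j = sup_{t>0} t ^ j w(t)`, while the choice
`bₖ = 2⁻ᵏ / (rₖ ^ pₖ M^u_{pₖ})` makes it a member of dilates of `H^∞_u(ℂ)`. The union is settled
by the single series `∑ₖ zᵏ / (2ᵏ M^u_k)`, the intersection by a lacunary series running through
exponents at which `M^w_j ≤ A Bʲ M^u_j` fails for larger and larger `A` and `B`.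

Conversely, `M^w_j ≤ A Bʲ M^u_j` gives `w(B t) ≤ A t⁻ʲ M^u_j` for every `j`. If `u` is convex, then
`u(t)` is recovered from the numbers `t⁻ʲ M^u_j` up to a factor `t`, the price of rounding the slope
of a supporting line to an integer `j`. One further dilation, of `u` or of `w`, absorbs this factor.
-/

/-- The relation `u ≼_𝔠 w` between weights. -/
def DilationLE (u w : ℝ → ℝ) : Prop :=
  ∃ c : ℝ, 1 ≤ c ∧ ∃ C : ℝ, 1 ≤ C ∧ ∀ t : ℝ, 0 ≤ t → w (c * t) ≤ C * u t

/-- The inductive limit of dilatation type `⋃_{n ≥ 1} H^∞_{v_n}(ℂ)`, as a set. -/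
def HinfUnion (v : ℝ → ℝ) : Set (ℂ → ℂ) :=
  ⋃ n : {n : ℕ // 1 ≤ n}, Hinf fun t : ℝ => v ((n.1 : ℝ) * t)

/-- The projective limit of dilatation type `⋂_{c > 0} H^∞_{v_c}(ℂ)`, as a set. -/
def HinfInter (v : ℝ → ℝ) : Set (ℂ → ℂ) :=
  ⋂ c : {c : ℝ // 0 < c}, Hinf fun t : ℝ => v (c.1 * t)

/-- The relation `M ≼ N` between sequences. For positive sequences it says that
`(M_j / N_j) ^ (1 / j)`, `j ≥ 1`, is bounded. -/
def SeqLE (M N : ℕ → ℝ) : Prop :=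
  ∃ A : ℝ, 0 ≤ A ∧ ∃ B : ℝ, 1 ≤ B ∧ ∀ j, M j ≤ A * B ^ j * N j

/-- Derivation closedness of a weight, the analogue of `M_{j+1} ≤ D ^ (j + 1) * M_j` for weight
sequences: a dilation of `v` absorbs a linear factor. It is implied by moderate growth and also
holds for weights such as `exp (-(log t) ^ 2)`, `t ≥ 1`, which are not of moderate growth. -/
def DerivationClosedWeight (v : ℝ → ℝ) : Prop :=
  ∃ H : ℝ, 1 ≤ H ∧ ∃ D : ℝ, 0 ≤ D ∧ ∀ t : ℝ, 0 ≤ t → t * v (H * t) ≤ D * v t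

section Weights

variable {v : ℝ → ℝ}

lemma IsWeight.pos (hv : IsWeight v) {t : ℝ} (ht : 0 ≤ t) : 0 < v t := hv.1 t ht

lemma IsWeight.le_of_le (hv : IsWeight v) {s t : ℝ} (hs : 0 ≤ s) (hst : s ≤ t) : v t ≤ v s :=
  hv.2.2.1 hs (hs.trans hst) hst

lemma IsWeight.exists_pow_mul_le (hv : IsWeight v) (j : ℕ) :
    ∃ K : ℝ, ∀ t : ℝ, 0 ≤ t → t ^ j * v t ≤ K := by
  obtain ⟨T, hT⟩ := eventually_atTop.1 ((hv.2.2.2 j).eventually_le_const zero_lt_one)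
  refine ⟨max 1 (T ^ j * v 0), fun t ht => ?_⟩
  rcases le_total T t with hTt | htT
  · exact (hT t hTt).trans (le_max_left _ _)
  · have hv0 := hv.pos ht
    have hvt := hv.le_of_le le_rfl ht
    have hT0 := ht.trans htT
    refine le_max_of_le_right ?_
    gcongr

lemma ModerateGrowthW.derivationClosedWeight (h : ModerateGrowthW v) (hv : IsWeight v) :
    DerivationClosedWeight v := by
  obtain ⟨H, hH, h⟩ := h
  obtain ⟨K, hK⟩ := hv.exists_pow_mul_le 1
  simp only [pow_one] at hK
  have hK0 : 0 ≤ K := by simpa using hK 0 le_rfl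
  refine ⟨H, hH, Real.exp H * K, by positivity, fun t ht => ?_⟩
  have hvt := hv.pos ht
  calc t * v (H * t) ≤ t * (Real.exp H * v t ^ 2) := by gcongr; exact h t ht
    _ = Real.exp H * (t * v t) * v t := by ring
    _ ≤ Real.exp H * K * v t := by gcongr; exact hK t ht

lemma assocSeq_le {j : ℕ} {K : ℝ} (h : ∀ t : ℝ, 0 < t → t ^ j * v t ≤ K) : assocSeq v j ≤ K :=
  haveI : Nonempty (Ioi (0 : ℝ)) := nonempty_Ioi.to_subtype
  ciSup_le fun t => h t t.2

lemma IsWeight.pow_mul_le_assocSeq (hv : IsWeight v) (j : ℕ) {t : ℝ} (ht : 0 ≤ t) :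
    t ^ j * v t ≤ assocSeq v j := by
  obtain ⟨K, hK⟩ := hv.exists_pow_mul_le j
  have hbdd : BddAbove (range fun s : Ioi (0 : ℝ) => (s : ℝ) ^ j * v s) :=
    ⟨K, forall_mem_range.2 fun s => hK s s.2.le⟩
  have hcont : ContinuousWithinAt (fun s => s ^ j * v s) (Ioi 0) t :=
    (continuous_pow j).continuousWithinAt.mul ((hv.2.1 t ht).mono Ioi_subset_Ici_self)
  -- The supremum runs over `t > 0` only, so `t = 0` is reached by continuity.
  exact hcont.closure_le (by rwa [closure_Ioi]) continuousWithinAt_const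
    fun s hs => le_ciSup hbdd ⟨s, hs⟩

lemma IsWeight.assocSeq_pos (hv : IsWeight v) (j : ℕ) : 0 < assocSeq v j :=
  (mul_pos (pow_pos one_pos j) (hv.pos zero_le_one)).trans_le
    (hv.pow_mul_le_assocSeq j zero_le_one)

lemma IsWeight.pow_mul_dilation_le (hv : IsWeight v) (j : ℕ) {c t : ℝ} (hc : 0 < c)
    (ht : 0 ≤ t) : t ^ j * v (c * t) ≤ assocSeq v j / c ^ j := by
  rw [le_div_iff₀ (pow_pos hc j)]
  calc t ^ j * v (c * t) * c ^ j = (c * t) ^ j * v (c * t) := by ring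
    _ ≤ assocSeq v j := hv.pow_mul_le_assocSeq j (by positivity)

end Weights

section Convexity

lemma exists_subgradient_of_convexOn {g : ℝ → ℝ} (hg : ConvexOn ℝ univ g) (x : ℝ) :
    ∃ l : ℝ, ∀ y, g x + l * (y - x) ≤ g y := by
  have hx : x ∈ interior (univ : Set ℝ) := by simp only [interior_univ, mem_univ]
  refine ⟨derivWithin g (Ioi x) x, fun y => ?_⟩
  rcases lt_trichotomy x y with h | rfl | h
  · have := hg.rightDeriv_le_slope_of_mem_interior hx (mem_univ y) h
    rw [slope_def_field, le_div_iff₀ (sub_pos.2 h)] at this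
    linarith
  · simp
  · have := (hg.slope_le_leftDeriv_of_mem_interior (mem_univ y) hx h).trans
      (hg.leftDeriv_le_rightDeriv_of_mem_interior hx)
    rw [slope_def_field, div_le_iff₀ (sub_pos.2 h)] at this
    linarith

variable {u : ℝ → ℝ}

lemma ConvexWeight.exists_rpow_mul_le (huc : ConvexWeight u) (hu : IsWeight u) {t : ℝ}
    (ht : 0 < t) : ∃ l : ℝ, 0 ≤ l ∧ ∀ s : ℝ, 0 < s → s ^ l * u s ≤ t ^ l * u t := by
  obtain ⟨l, hl⟩ := exists_subgradient_of_convexOn huc (Real.log t)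
  have hlog {s : ℝ} (hs : 0 < s) :
      l * Real.log s + Real.log (u s) ≤ l * Real.log t + Real.log (u t) := by
    have := hl (Real.log s)
    rw [Real.exp_log ht, Real.exp_log hs] at this
    linarith
  have hut := hu.pos ht.le
  refine ⟨l, ?_, fun s hs => ?_⟩
  · have hs : 0 < t / 2 := half_pos ht
    have hlog_half : Real.log (t / 2) = Real.log t - Real.log 2 :=
      Real.log_div ht.ne' two_ne_zero
    have hanti : Real.log (u t) ≤ Real.log (u (t / 2)) :=
      Real.log_le_log hut (hu.le_of_le hs.le (half_le_self ht.le))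
    have hmul : 0 ≤ l * Real.log 2 := by linarith [hlog_half ▸ hlog hs]
    exact nonneg_of_mul_nonneg_left hmul (Real.log_pos one_lt_two)
  · have hus := hu.pos hs.le
    rw [← Real.log_le_log_iff (by positivity) (by positivity),
      Real.log_mul (by positivity) hus.ne', Real.log_mul (by positivity) hut.ne',
      Real.log_rpow hs, Real.log_rpow ht]
    exact hlog hs

lemma ConvexWeight.exists_assocSeq_le (huc : ConvexWeight u) (hu : IsWeight u) {t : ℝ}
    (ht : 1 ≤ t) : ∃ j : ℕ, assocSeq u j ≤ u 0 / u 1 * (t ^ (j + 1) * u t) := by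
  have ht0 : 0 < t := one_pos.trans_le ht
  obtain ⟨l, hl0, hl⟩ := huc.exists_rpow_mul_le hu ht0
  have hu0 := hu.pos le_rfl
  have hu1 := hu.pos zero_le_one
  have hut := hu.pos ht0.le
  have hfloor {s : ℝ} (hs : 1 ≤ s) : s ^ ⌊l⌋₊ * u s ≤ t ^ (⌊l⌋₊ + 1) * u t := by
    have hs0 : 0 < s := one_pos.trans_le hs
    have hus := hu.pos hs0.le
    calc s ^ ⌊l⌋₊ * u s ≤ s ^ l * u s := by
          gcongr
          rw [← Real.rpow_natCast]
          exact Real.rpow_le_rpow_of_exponent_le hs (Nat.floor_le hl0)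
      _ ≤ t ^ l * u t := hl s hs0
      _ ≤ t ^ (⌊l⌋₊ + 1) * u t := by
          gcongr
          rw [← Real.rpow_natCast, Nat.cast_succ]
          exact Real.rpow_le_rpow_of_exponent_le ht (Nat.lt_floor_add_one l).le
  refine ⟨⌊l⌋₊, assocSeq_le fun s hs => ?_⟩
  rcases le_total 1 s with h1s | hs1
  · exact (hfloor h1s).trans (le_mul_of_one_le_left (by positivity)
      ((one_le_div hu1).2 (hu.le_of_le le_rfl zero_le_one)))
  · calc s ^ ⌊l⌋₊ * u s ≤ 1 * u 0 :=
          mul_le_mul (pow_le_one₀ hs.le hs1) (hu.le_of_le le_rfl hs.le) (hu.pos hs.le).le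
            zero_le_one
      _ = u 0 / u 1 * (1 ^ ⌊l⌋₊ * u 1) := by field_simp; simp
      _ ≤ u 0 / u 1 * (t ^ (⌊l⌋₊ + 1) * u t) :=
          mul_le_mul_of_nonneg_left (hfloor le_rfl) (by positivity)

end Convexity

section LacunarySeries

/-- The entire function `∑ₖ bₖ z ^ pₖ`, used with `bₖ ≥ 0` to test inclusions of weighted spaces.
The exponents `pₖ` may repeat and come in any order. -/
noncomputable def lacunarySeries (b : ℕ → ℝ) (p : ℕ → ℕ) (z : ℂ) : ℂ :=
  ∑' k, (b k : ℂ) * z ^ p k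

variable {b a : ℕ → ℝ} {p : ℕ → ℕ} {v : ℝ → ℝ}

lemma norm_ofReal_mul_pow {r : ℝ} (hr : 0 ≤ r) (z : ℂ) (n : ℕ) :
    ‖(r : ℂ) * z ^ n‖ = r * ‖z‖ ^ n := by
  rw [norm_mul, norm_pow, Complex.norm_of_nonneg hr]

lemma differentiable_lacunarySeries (hb : ∀ k, 0 ≤ b k)
    (hs : ∀ t : ℝ, 0 ≤ t → Summable fun k => b k * t ^ p k) :
    Differentiable ℂ (lacunarySeries b p) := by
  intro z
  have hdiff : DifferentiableOn ℂ (lacunarySeries b p) (Metric.ball 0 (‖z‖ + 1)) := by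
    refine Complex.differentiableOn_tsum_of_summable_norm (hs (‖z‖ + 1) (by positivity))
      (fun k => by fun_prop) Metric.isOpen_ball fun k x hx => ?_
    have := hb k
    rw [norm_ofReal_mul_pow this]
    gcongr
    exact (mem_ball_zero_iff.1 hx).le
  exact hdiff.differentiableAt (Metric.isOpen_ball.mem_nhds (by simp))

lemma mul_pow_le_norm_lacunarySeries (hb : ∀ k, 0 ≤ b k) {t : ℝ} (ht : 0 ≤ t)
    (hs : Summable fun k => b k * t ^ p k) (k : ℕ) :
    b k * t ^ p k ≤ ‖lacunarySeries b p t‖ := by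
  have hterm k : 0 ≤ b k * t ^ p k := mul_nonneg (hb k) (pow_nonneg ht _)
  have hreal : lacunarySeries b p t = ((∑' k, b k * t ^ p k : ℝ) : ℂ) := by
    simp only [lacunarySeries, Complex.ofReal_tsum, Complex.ofReal_mul, Complex.ofReal_pow]
  rw [hreal, Complex.norm_of_nonneg (tsum_nonneg hterm)]
  exact hs.le_tsum k fun i _ => hterm i

lemma summable_of_mul_le {f : ℕ → ℝ} {r : ℝ} (hr : 0 < r) (hf : ∀ k, 0 ≤ f k) (ha : Summable a)
    (h : ∀ k, f k * r ≤ a k) : Summable f :=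
  .of_nonneg_of_le hf (fun k => (le_div_iff₀ hr).2 (h k)) (ha.div_const r)

lemma lacunarySeries_mem_Hinf (hv : ∀ t : ℝ, 0 ≤ t → 0 < v t) (hb : ∀ k, 0 ≤ b k)
    (ha : Summable a) (h : ∀ k, ∀ t : ℝ, 0 ≤ t → b k * t ^ p k * v t ≤ a k) :
    lacunarySeries b p ∈ Hinf v := by
  refine ⟨differentiable_lacunarySeries hb fun t ht => summable_of_mul_le (hv t ht)
    (fun k => mul_nonneg (hb k) (pow_nonneg ht _)) ha (h · t ht), ∑' k, a k, fun z => ?_⟩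
  have hvz := hv _ (norm_nonneg z)
  rw [← le_div_iff₀ hvz]
  refine tsum_of_norm_bounded (ha.hasSum.div_const _) fun k => ?_
  rw [norm_ofReal_mul_pow (hb k), le_div_iff₀ hvz]
  exact h k _ (norm_nonneg z)

end LacunarySeries

section TestSeries

/-- The coefficients `2⁻ᵏ / (rₖ ^ pₖ M^v_{pₖ})` of the test series for `v`: the growth of `rₖ`
decides to which dilates of `H^∞_v(ℂ)` the series belongs. -/
noncomputable def testCoeff (v : ℝ → ℝ) (r : ℕ → ℝ) (p : ℕ → ℕ) (k : ℕ) : ℝ :=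
  (1 / 2) ^ k / (r k ^ p k * assocSeq v (p k))

variable {v w : ℝ → ℝ} {r : ℕ → ℝ} {p : ℕ → ℕ} {c d : ℝ}

lemma testCoeff_pos (hv : IsWeight v) (hr : ∀ k, 0 < r k) (k : ℕ) : 0 < testCoeff v r p k :=
  div_pos (by positivity) (mul_pos (pow_pos (hr k) _) (hv.assocSeq_pos _))

lemma testCoeff_mul_pow_mul_le (hv : IsWeight v) (hr : ∀ k, 0 < r k) (hc : 0 < c) (k : ℕ) {t : ℝ}
    (ht : 0 ≤ t) : testCoeff v r p k * t ^ p k * v (c * t) ≤ (1 / 2) ^ k / (c * r k) ^ p k := by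
  have hM := hv.assocSeq_pos (p k)
  have hrk := hr k
  calc testCoeff v r p k * t ^ p k * v (c * t)
      ≤ testCoeff v r p k * (assocSeq v (p k) / c ^ p k) := by
        rw [mul_assoc]
        exact mul_le_mul_of_nonneg_left (hv.pow_mul_dilation_le _ hc ht) (testCoeff_pos hv hr k).le
    _ = (1 / 2) ^ k / (c * r k) ^ p k := by
        rw [testCoeff, mul_pow]
        field_simp

lemma summable_half_pow_div_pow {q : ℕ → ℝ} (hq : ∀ᶠ k in atTop, 1 ≤ q k) :
    Summable fun k => (1 / 2 : ℝ) ^ k / q k ^ p k := by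
  refine summable_geometric_two.of_norm_bounded_eventually_nat ?_
  filter_upwards [hq] with k hk
  rw [Real.norm_of_nonneg (by positivity)]
  exact div_le_self (by positivity) (one_le_pow₀ hk)

lemma testSeries_mem_Hinf (hv : IsWeight v) (hr : ∀ k, 0 < r k) (hc : 0 < c)
    (hcr : ∀ᶠ k in atTop, 1 ≤ c * r k) :
    lacunarySeries (testCoeff v r p) p ∈ Hinf fun t => v (c * t) :=
  lacunarySeries_mem_Hinf (fun _ ht => hv.pos (mul_nonneg hc.le ht))
    (fun k => (testCoeff_pos hv hr k).le) (summable_half_pow_div_pow hcr)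
    fun k _ ht => testCoeff_mul_pow_mul_le hv hr hc k ht

lemma summable_testCoeff_mul_pow (hv : IsWeight v) (hr : ∀ k, 1 ≤ r k) {t : ℝ} (ht : 0 ≤ t) :
    Summable fun k => testCoeff v r p k * t ^ p k := by
  have hr0 k : 0 < r k := one_pos.trans_le (hr k)
  refine summable_of_mul_le (hv.pos (mul_nonneg zero_le_one ht))
    (fun k => mul_nonneg (testCoeff_pos hv hr0 k).le (pow_nonneg ht _))
    (summable_half_pow_div_pow (.of_forall fun k => ?_))
    fun k => testCoeff_mul_pow_mul_le hv hr0 one_pos k ht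
  simpa only [one_mul] using hr k

lemma exists_assocSeq_le_of_testSeries_mem_Hinf (hv : IsWeight v) (hw : ∀ t : ℝ, 0 ≤ t → 0 ≤ w t)
    (hr : ∀ k, 1 ≤ r k) (hd : 0 < d)
    (hf : lacunarySeries (testCoeff v r p) p ∈ Hinf fun t => w (d * t)) :
    ∃ C : ℝ, 0 ≤ C ∧
      ∀ k, assocSeq w (p k) ≤ C * 2 ^ k * (d * r k) ^ p k * assocSeq v (p k) := by
  obtain ⟨-, C, hC⟩ := hf
  have hr0 k : 0 < r k := one_pos.trans_le (hr k)
  have hC0 : 0 ≤ C :=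
    (mul_nonneg (norm_nonneg _) (hw _ (mul_nonneg hd.le (norm_nonneg _)))).trans (hC 0)
  refine ⟨C, hC0, fun k => assocSeq_le fun s hs => ?_⟩
  have hM := hv.assocSeq_pos (p k)
  have hrk := hr0 k
  have ht : 0 ≤ s / d := by positivity
  have hterm : testCoeff v r p k * (s / d) ^ p k * w s ≤ C := by
    have hfs := hC (s / d : ℝ)
    beta_reduce at hfs
    rw [Complex.norm_of_nonneg ht, mul_div_cancel₀ s hd.ne'] at hfs
    exact (mul_le_mul_of_nonneg_right (mul_pow_le_norm_lacunarySeries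
      (fun k => (testCoeff_pos hv hr0 k).le) ht (summable_testCoeff_mul_pow hv hr ht) k)
      (hw s hs.le)).trans hfs
  calc s ^ p k * w s
      = testCoeff v r p k * (s / d) ^ p k * w s
          * (2 ^ k * (d * r k) ^ p k * assocSeq v (p k)) := by
        rw [testCoeff, div_pow, div_pow, mul_pow, one_pow]
        field_simp
    _ ≤ C * (2 ^ k * (d * r k) ^ p k * assocSeq v (p k)) := by gcongr
    _ = C * 2 ^ k * (d * r k) ^ p k * assocSeq v (p k) := by ring

end TestSeries

section Inclusions

variable {u w : ℝ → ℝ}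

lemma Hinf_subset_of_le {C : ℝ} (hC : 0 ≤ C) (h : ∀ t : ℝ, 0 ≤ t → w t ≤ C * u t) :
    Hinf u ⊆ Hinf w := by
  rintro f ⟨hf, K, hK⟩
  refine ⟨hf, C * K, fun z => ?_⟩
  calc ‖f z‖ * w ‖z‖ ≤ ‖f z‖ * (C * u ‖z‖) := by gcongr; exact h _ (norm_nonneg z)
    _ = C * (‖f z‖ * u ‖z‖) := by ring
    _ ≤ C * K := by gcongr; exact hK z

lemma DilationLE.HinfUnion_subset (h : DilationLE u w) (hw : AntitoneOn w (Ici 0)) :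
    HinfUnion u ⊆ HinfUnion w := by
  obtain ⟨c, hc, C, hC, h⟩ := h
  refine iUnion_subset fun ⟨n, hn⟩ => ?_
  have hcn : 0 < c * n := mul_pos (by linarith) (by exact_mod_cast hn)
  refine Subset.trans ?_ (subset_iUnion _ ⟨⌈c * n⌉₊, Nat.ceil_pos.2 hcn⟩)
  refine Hinf_subset_of_le (zero_le_one.trans hC) fun t ht => ?_
  calc w (⌈c * n⌉₊ * t) ≤ w (c * n * t) :=
        hw (mul_nonneg hcn.le ht) (mul_nonneg (Nat.cast_nonneg _) ht)
          (mul_le_mul_of_nonneg_right (Nat.le_ceil _) ht)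
    _ = w (c * (n * t)) := by rw [mul_assoc]
    _ ≤ C * u (n * t) := h _ (by positivity)

lemma DilationLE.HinfInter_subset (h : DilationLE u w) : HinfInter u ⊆ HinfInter w := by
  obtain ⟨c, hc, C, hC, h⟩ := h
  have hc0 : 0 < c := one_pos.trans_le hc
  refine subset_iInter fun ⟨d, hd⟩ => (iInter_subset _ ⟨d / c, div_pos hd hc0⟩).trans ?_
  refine Hinf_subset_of_le (zero_le_one.trans hC) fun t ht => ?_
  calc w (d * t) = w (c * (d / c * t)) := by rw [← mul_assoc, mul_div_cancel₀ d hc0.ne']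
    _ ≤ C * u (d / c * t) := h _ (by positivity)

lemma seqLE_assocSeq_of_HinfUnion_subset (hu : IsWeight u) (hw : ∀ t : ℝ, 0 ≤ t → 0 ≤ w t)
    (h : HinfUnion u ⊆ HinfUnion w) : SeqLE (assocSeq w) (assocSeq u) := by
  have hmem : lacunarySeries (testCoeff u (fun _ => 1) id) id ∈ HinfUnion u :=
    mem_iUnion.2 ⟨⟨1, le_rfl⟩, testSeries_mem_Hinf hu (fun _ => one_pos) (by simp) (by simp)⟩
  obtain ⟨⟨n, hn⟩, hf⟩ := mem_iUnion.1 (h hmem)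
  have hn1 : (1 : ℝ) ≤ n := by exact_mod_cast hn
  obtain ⟨A, hA, hle⟩ := exists_assocSeq_le_of_testSeries_mem_Hinf hu hw (fun _ => le_rfl)
    (one_pos.trans_le hn1) hf
  refine ⟨A, hA, 2 * n, by linarith, fun j => (hle j).trans_eq ?_⟩
  simp only [id_eq, mul_one, mul_pow, mul_assoc]

lemma seqLE_assocSeq_of_HinfInter_subset (hu : IsWeight u) (hw : ∀ t : ℝ, 0 ≤ t → 0 ≤ w t)
    (h : HinfInter u ⊆ HinfInter w) : SeqLE (assocSeq w) (assocSeq u) := by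
  by_contra hnot
  have hfail (k : ℕ) : ∃ j, 4 ^ k * (k + 1 : ℝ) ^ j * assocSeq u j < assocSeq w j := by
    by_contra! hk
    exact hnot ⟨4 ^ k, by positivity, k + 1, by simp, hk⟩
  choose p hp using hfail
  let r (k : ℕ) : ℝ := k + 1
  have hr k : 1 ≤ r k := le_add_of_nonneg_left k.cast_nonneg
  have hr0 k : 0 < r k := one_pos.trans_le (hr k)
  have hmem : lacunarySeries (testCoeff u r p) p ∈ HinfInter u := by
    refine mem_iInter.2 fun ⟨c, hc⟩ => testSeries_mem_Hinf hu hr0 hc ?_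
    have hlim : Tendsto (fun k => c * r k) atTop atTop :=
      (tendsto_atTop_add_const_right _ 1 tendsto_natCast_atTop_atTop).const_mul_atTop hc
    exact hlim.eventually_ge_atTop 1
  obtain ⟨C, -, hle⟩ := exists_assocSeq_le_of_testSeries_mem_Hinf hu hw hr one_pos
    (mem_iInter.1 (h hmem) ⟨1, one_pos⟩)
  obtain ⟨k, hk⟩ := pow_unbounded_of_one_lt C (one_lt_two (α := ℝ))
  have hM := hu.assocSeq_pos (p k)
  refine (hp k).not_ge ?_
  calc assocSeq w (p k) ≤ C * 2 ^ k * (1 * r k) ^ p k * assocSeq u (p k) := hle k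
    _ ≤ 2 ^ k * 2 ^ k * r k ^ p k * assocSeq u (p k) := by rw [one_mul]; gcongr
    _ = 4 ^ k * r k ^ p k * assocSeq u (p k) := by rw [← mul_pow]; norm_num

end Inclusions

section Domination

variable {u w : ℝ → ℝ}

lemma dilationLE_of_one_le (hu : IsWeight u) (hw : IsWeight w) {c D : ℝ} (hc : 1 ≤ c) (hD : 0 ≤ D)
    (h : ∀ t : ℝ, 1 ≤ t → w (c * t) ≤ D * u t) : DilationLE u w := by
  have hu1 := hu.pos zero_le_one
  have hw0 := hw.pos le_rfl
  have hquot : 0 ≤ w 0 / u 1 := by positivity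
  refine ⟨c, hc, 1 + D + w 0 / u 1, by linarith, fun t ht => ?_⟩
  have hut := hu.pos ht
  rcases le_total 1 t with h1t | ht1
  · calc w (c * t) ≤ D * u t := h t h1t
      _ ≤ (1 + D + w 0 / u 1) * u t := by gcongr; linarith
  · calc w (c * t) ≤ w 0 := hw.le_of_le le_rfl (by positivity)
      _ = w 0 / u 1 * u 1 := (div_mul_cancel₀ _ hu1.ne').symm
      _ ≤ (1 + D + w 0 / u 1) * u t := by
          gcongr
          · linarith
          · exact hu.le_of_le ht ht1

lemma SeqLE.exists_dilation_le (huc : ConvexWeight u) (hu : IsWeight u) (hw : IsWeight w)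
    (h : SeqLE (assocSeq w) (assocSeq u)) :
    ∃ B : ℝ, 1 ≤ B ∧ ∃ A : ℝ, 0 ≤ A ∧ ∀ t : ℝ, 1 ≤ t → w (B * t) ≤ A * t * u t := by
  obtain ⟨A, hA, B, hB, h⟩ := h
  have hu0 := hu.pos le_rfl
  have hu1 := hu.pos zero_le_one
  refine ⟨B, hB, A * (u 0 / u 1), by positivity, fun t ht => ?_⟩
  have hBt : 0 < B * t := by positivity
  obtain ⟨j, hj⟩ := huc.exists_assocSeq_le hu ht
  refine le_of_mul_le_mul_left ?_ (pow_pos hBt j)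
  calc (B * t) ^ j * w (B * t) ≤ assocSeq w j := hw.pow_mul_le_assocSeq j hBt.le
    _ ≤ A * B ^ j * assocSeq u j := h j
    _ ≤ A * B ^ j * (u 0 / u 1 * (t ^ (j + 1) * u t)) := by gcongr
    _ = (B * t) ^ j * (A * (u 0 / u 1) * t * u t) := by ring

lemma SeqLE.dilationLE (huc : ConvexWeight u) (hu : IsWeight u) (hw : IsWeight w)
    (hdc : DerivationClosedWeight u ∨ DerivationClosedWeight w)
    (h : SeqLE (assocSeq w) (assocSeq u)) : DilationLE u w := by
  obtain ⟨B, hB, A, hA, hle⟩ := h.exists_dilation_le huc hu hw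
  rcases hdc with ⟨H, hH, D, hD, hdc⟩ | ⟨H, hH, D, hD, hdc⟩
  · refine dilationLE_of_one_le hu hw (c := B * H) (D := A * H * D)
      (one_le_mul_of_one_le_of_one_le hB hH) (by positivity) fun t ht => ?_
    calc w (B * H * t) = w (B * (H * t)) := by rw [mul_assoc]
      _ ≤ A * (H * t) * u (H * t) := hle _ (one_le_mul_of_one_le_of_one_le hH ht)
      _ = A * H * (t * u (H * t)) := by ring
      _ ≤ A * H * (D * u t) := mul_le_mul_of_nonneg_left (hdc t (by positivity)) (by positivity)
      _ = A * H * D * u t := by ring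
  · refine dilationLE_of_one_le hu hw (c := H * B) (D := D * A)
      (one_le_mul_of_one_le_of_one_le hH hB) (by positivity) fun t ht => ?_
    have hBt : 0 ≤ B * t := by positivity
    have hwt := hw.pos (mul_nonneg (zero_le_one.trans hH) hBt)
    refine le_of_mul_le_mul_left ?_ (one_pos.trans_le ht)
    calc t * w (H * B * t) = t * w (H * (B * t)) := by rw [mul_assoc H]
      _ ≤ B * t * w (H * (B * t)) := by gcongr; exact le_mul_of_one_le_left (by positivity) hB
      _ ≤ D * w (B * t) := hdc _ hBt
      _ ≤ D * (A * t * u t) := by gcongr; exact hle t ht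
      _ = t * (D * A * u t) := by ring

end Domination

theorem stmt13_general {u w : ℝ → ℝ} (hu : IsWeight u) (huc : ConvexWeight u) (hw : IsWeight w)
    (hdc : DerivationClosedWeight u ∨ DerivationClosedWeight w) :
    (DilationLE u w ↔ HinfUnion u ⊆ HinfUnion w) ∧
      (DilationLE u w ↔ HinfInter u ⊆ HinfInter w) := by
  have hw0 : ∀ t : ℝ, 0 ≤ t → 0 ≤ w t := fun _ ht => (hw.pos ht).le
  refine ⟨⟨fun h => h.HinfUnion_subset hw.2.2.1, fun h => ?_⟩,
    ⟨fun h => h.HinfInter_subset, fun h => ?_⟩⟩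
  · exact (seqLE_assocSeq_of_HinfUnion_subset hu hw0 h).dilationLE huc hu hw hdc
  · exact (seqLE_assocSeq_of_HinfInter_subset hu hw0 h).dilationLE huc hu hw hdc

/-- Theorem: for normalized weights `u`, `w` with `u` convex and one of them of
moderate growth: `u ≼_𝔠 w` is equivalent to inclusion of the dilatation-type
unions, and to inclusion of the dilatation-type intersections. -/
theorem stmt13 (u w : ℝ → ℝ) (hu : IsWeight u) (hun : NormalizedWeight u)
    (huc : ConvexWeight u) (hw : IsWeight w) (hwn : NormalizedWeight w)
    (hmg : ModerateGrowthW u ∨ ModerateGrowthW w) :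
    ((∃ c : ℝ, 1 ≤ c ∧ ∃ C : ℝ, 1 ≤ C ∧
        ∀ t : ℝ, 0 ≤ t → w (c * t) ≤ C * u t) ↔
      (⋃ n : {n : ℕ // 1 ≤ n}, Hinf fun t : ℝ => u ((n.1 : ℝ) * t)) ⊆
        ⋃ n : {n : ℕ // 1 ≤ n}, Hinf fun t : ℝ => w ((n.1 : ℝ) * t)) ∧
    ((∃ c : ℝ, 1 ≤ c ∧ ∃ C : ℝ, 1 ≤ C ∧
        ∀ t : ℝ, 0 ≤ t → w (c * t) ≤ C * u t) ↔
      (⋂ c : {c : ℝ // 0 < c}, Hinf fun t : ℝ => u (c.1 * t)) ⊆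
        ⋂ c : {c : ℝ // 0 < c}, Hinf fun t : ℝ => w (c.1 * t)) :=
  stmt13_general hu huc hw
    (hmg.imp (·.derivationClosedWeight hu) (·.derivationClosedWeight hw))
end
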